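/- Let n ≥ 2, 1 ≤ k ≤ n-1 and 0 ≤ σ ≤ σ_n = 2^{n-1}·n!. Then the Landau–Kolmogorov pointwise supremum m_k(x,σ) attains its maximum over x ∈ [-1,1] at the endpoint x = 1; that is, for every x ∈ [-1,1], m_k(x,σ) ≤ m_k(1,σ), and hence sup_{x∈[-1,1]} m_k(x,σ) = m_k(1,σ). -/

import Mathlib

open Polynomial Set

/-- `k`-th derivative of the Chebyshev polynomial `T_m`, evaluated at `x`. -/
noncomputable def chebDeriv (m : ℤ) (k : ℕ) (x : ℝ) : ℝ :=
  (derivative^[k] (Polynomial.Chebyshev.T ℝ m)).eval x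

/-- `σ_n = 2^(n-1) n! = T_n^{(n)}(1)`. -/
noncomputable def sigmaN (n : ℕ) : ℝ := 2 ^ (n - 1) * (n.factorial : ℝ)

/-- `f` is `n` times differentiable on the set `s`. -/
def NTimesDiffOn (n : ℕ) (f : ℝ → ℝ) (s : Set ℝ) : Prop :=
  ∀ i < n, DifferentiableOn ℝ (iteratedDerivWithin i f s) s

/-- The class `W^n_∞(σ)` on `[-1,1]`. -/
def memW (n : ℕ) (σ : ℝ) (f : ℝ → ℝ) : Prop :=
  NTimesDiffOn n f (Icc (-1:ℝ) 1) ∧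
  (∀ x ∈ Icc (-1:ℝ) 1, |f x| ≤ 1) ∧
  (∀ x ∈ Icc (-1:ℝ) 1, |iteratedDerivWithin n f (Icc (-1:ℝ) 1) x| ≤ σ)

/-- `m_k(x,σ) = sup { |f^{(k)}(x)| : f ∈ W^n_∞(σ) }`. -/
noncomputable def mval (n k : ℕ) (x σ : ℝ) : ℝ :=
  sSup {y | ∃ f : ℝ → ℝ, memW n σ f ∧
    y = |iteratedDerivWithin k f (Icc (-1:ℝ) 1) x|}

/-- `m_k^*(x,σ) = sup { |f^{(k)}(x)| : f ∈ W^n_∞(σ), f^{(k+1)}(x) = 0 }`. -/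
noncomputable def mstar (n k : ℕ) (x σ : ℝ) : ℝ :=
  sSup {y | ∃ f : ℝ → ℝ, memW n σ f ∧
    iteratedDerivWithin (k+1) f (Icc (-1:ℝ) 1) x = 0 ∧
    y = |iteratedDerivWithin k f (Icc (-1:ℝ) 1) x|}

/-- `μ_k(x₀)`: best constant in the pointwise Markov inequality. -/
noncomputable def muk (n k : ℕ) (x : ℝ) : ℝ :=
  sSup {y | ∃ p : Polynomial ℝ, p.natDegree ≤ n ∧
    (∀ t ∈ Icc (-1:ℝ) 1, |p.eval t| ≤ 1) ∧
    y = |(derivative^[k] p).eval x|}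

/-- `μ_k^*(x₀)`: best constant in the pointwise Schur-type inequality. -/
noncomputable def mukStar (n k : ℕ) (x : ℝ) : ℝ :=
  sSup {y | ∃ p : Polynomial ℝ, p.natDegree ≤ n ∧
    (∀ t ∈ Icc (-1:ℝ) 1, |p.eval t| ≤ 1) ∧
    (derivative^[k+1] p).eval x = 0 ∧
    y = |(derivative^[k] p).eval x|}


/-- Towers of derivatives on `[-1,1]`. -/
def Tow (n : ℕ) (D : ℕ → ℝ → ℝ) : Prop :=
  ∀ i < n, ∀ x ∈ Icc (-1:ℝ) 1, HasDerivWithinAt (D i) (D (i+1) x) (Icc (-1:ℝ) 1) x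

/-- `g` alternates in sign at `m` decreasing points, the sign at the largest one being `ε`. -/
def Alt (g : ℝ → ℝ) (m : ℕ) (ε : ℝ) : Prop :=
  ∃ z : ℕ → ℝ, (∀ i, i + 1 < m → z (i+1) < z i) ∧ (∀ i < m, z i ∈ Icc (-1:ℝ) 1) ∧
    (∀ i < m, 0 < ε * (-1)^i * g (z i))

lemma Tow.lin {n : ℕ} {D E : ℕ → ℝ → ℝ} (hD : Tow n D) (hE : Tow n E) (a b : ℝ) :
    Tow n (fun i x => a * D i x + b * E i x) := fun i hi x hx =>
  ((hD i hi x hx).const_mul a).add ((hE i hi x hx).const_mul b)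

lemma Tow.shift {n m : ℕ} {D : ℕ → ℝ → ℝ} (hD : Tow (n + m) D) :
    Tow n (fun i => D (i + m)) := fun i hi x hx => by
  have := hD (i + m) (by omega) x hx
  rwa [show i + m + 1 = i + 1 + m by omega] at this

lemma Tow.mono {n m : ℕ} {D : ℕ → ℝ → ℝ} (hD : Tow n D) (h : m ≤ n) :
    Tow m D := fun i hi x hx => hD i (by omega) x hx

lemma mvt_step {g g' : ℝ → ℝ} (hg : ∀ x ∈ Icc (-1:ℝ) 1, HasDerivWithinAt g (g' x) (Icc (-1:ℝ) 1) x)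
    {a b : ℝ} (ha : a ∈ Icc (-1:ℝ) 1) (hb : b ∈ Icc (-1:ℝ) 1) (hab : a < b) :
    ∃ c ∈ Ioo a b, g' c * (b - a) = g b - g a := by
  have hsub : Icc a b ⊆ Icc (-1:ℝ) 1 := Icc_subset_Icc ha.1 hb.2
  obtain ⟨c, hc, h⟩ := exists_hasDerivAt_eq_slope g g' hab
    (fun x hx => ((hg x (hsub hx)).continuousWithinAt).mono hsub)
    (fun x hx => (hg x (hsub (Ioo_subset_Icc_self hx))).hasDerivAt
      (Icc_mem_nhds (lt_of_le_of_lt ha.1 hx.1) (lt_of_lt_of_le hx.2 hb.2)))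
  refine ⟨c, hc, ?_⟩
  rw [h]
  field_simp [sub_ne_zero.2 hab.ne']

lemma mvt_points {g g' : ℝ → ℝ}
    (hg : ∀ x ∈ Icc (-1:ℝ) 1, HasDerivWithinAt g (g' x) (Icc (-1:ℝ) 1) x)
    {a : ℕ → ℝ} {m : ℕ} (hmem : ∀ i ≤ m, a i ∈ Icc (-1:ℝ) 1) (hdec : ∀ i < m, a (i+1) < a i) :
    ∃ b : ℕ → ℝ, (∀ i < m, a (i+1) < b i ∧ b i < a i) ∧
      ∀ i < m, g' (b i) * (a i - a (i+1)) = g (a i) - g (a (i+1)) := by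
  have : ∀ i, ∃ c, i < m → (c ∈ Ioo (a (i+1)) (a i) ∧ g' c * (a i - a (i+1)) = g (a i) - g (a (i+1))) := by
    intro i
    by_cases h : i < m
    · obtain ⟨c, hc⟩ := mvt_step hg (hmem (i+1) h) (hmem i h.le) (hdec i h)
      exact ⟨c, fun _ => hc⟩
    · exact ⟨0, fun h' => absurd h' h⟩
  choose b hb using this
  exact ⟨b, fun i hi => ⟨(hb i hi).1.1, (hb i hi).1.2⟩, fun i hi => (hb i hi).2⟩

lemma pos_of_mul_diff {c d e s : ℝ} (hd : 0 < d) (h : c * d = e) (he : 0 < s * e) : 0 < s * c := by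
  subst h
  have : 0 < (s * c) * d := by linarith [mul_assoc s c d]
  exact pos_of_mul_pos_left this hd.le

/-- Derivative of a function with alternating differences alternates. -/
lemma alt_of_diff {g g' : ℝ → ℝ}
    (hg : ∀ x ∈ Icc (-1:ℝ) 1, HasDerivWithinAt g (g' x) (Icc (-1:ℝ) 1) x)
    {a : ℕ → ℝ} {m : ℕ} {ε : ℝ} (hmem : ∀ i ≤ m, a i ∈ Icc (-1:ℝ) 1)
    (hdec : ∀ i < m, a (i+1) < a i)
    (hdiff : ∀ i < m, 0 < ε * (-1)^i * (g (a i) - g (a (i+1)))) : Alt g' m ε := by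
  obtain ⟨b, hb, hb'⟩ := mvt_points hg hmem hdec
  refine ⟨b, fun i hi => (hb (i+1) hi).2.trans (hb i (by omega)).1, fun i hi => ?_, fun i hi => ?_⟩
  · have h1 := hmem (i+1) hi
    have h2 := hmem i hi.le
    have h3 := hb i hi
    exact ⟨by linarith [h1.1, h3.1], by linarith [h2.2, h3.2]⟩
  · exact pos_of_mul_diff (sub_pos.2 (hdec i hi)) (hb' i hi) (hdiff i hi)

lemma Alt.step {g g' : ℝ → ℝ}
    (hg : ∀ x ∈ Icc (-1:ℝ) 1, HasDerivWithinAt g (g' x) (Icc (-1:ℝ) 1) x)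
    {m : ℕ} {ε : ℝ} (h : Alt g (m+1) ε) : Alt g' m ε := by
  obtain ⟨z, hz, hm, hs⟩ := h
  refine alt_of_diff hg (a := z) (fun i hi => hm i (by omega)) (fun i hi => hz i (by omega)) ?_
  intro i hi
  have h1 := hs i (by omega)
  have h2 := hs (i+1) (by omega)
  rw [pow_succ] at h2
  nlinarith

lemma Alt.iter {D : ℕ → ℝ → ℝ} {n : ℕ} (hD : Tow n D) {m : ℕ} {ε : ℝ} :
    ∀ j ≤ n, Alt (D 0) (m + j) ε → Alt (D j) m ε := by
  intro j
  induction j generalizing m with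
  | zero => intro _ h; simpa using h
  | succ j ih =>
    intro hj h
    have := ih (m := m+1) (by omega) (by convert h using 1; omega)
    exact this.step (hD j (by omega))

lemma Alt.exists {g : ℝ → ℝ} {ε : ℝ} (h : Alt g 1 ε) : ∃ x ∈ Icc (-1:ℝ) 1, 0 < ε * g x := by
  obtain ⟨z, _, hm, hs⟩ := h
  exact ⟨z 0, hm 0 (by norm_num), by simpa using hs 0 (by norm_num)⟩

lemma exists_split {z : ℕ → ℝ} {x : ℝ} : ∀ {m : ℕ}, (∀ i, i + 1 < m → z (i+1) < z i) →
    (∀ i < m, z i ≠ x) → ∃ j ≤ m, (∀ i < j, x < z i) ∧ ∀ i, j ≤ i → i < m → z i < x := by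
  intro m
  induction m with
  | zero => intro _ _; exact ⟨0, le_rfl, by simp, by simp⟩
  | succ m ih =>
    intro hz hne
    obtain ⟨j, hj, h1, h2⟩ := ih (fun i hi => hz i (by omega)) (fun i hi => hne i (by omega))
    rcases Nat.lt_or_ge j m with hjm | hjm
    · refine ⟨j, by omega, h1, fun i hi him => ?_⟩
      rcases Nat.lt_or_ge i m with h | h
      · exact h2 i hi h
      · obtain rfl : i = m := by omega
        have := hz (i-1) (by omega)
        have e : i - 1 + 1 = i := by omega
        rw [e] at this
        exact this.trans (h2 (i-1) (by omega) (by omega))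
    · obtain rfl : j = m := by omega
      rcases lt_or_gt_of_ne (hne j (by omega)) with h | h
      · exact ⟨j, by omega, h1, fun i hi him => by
          obtain rfl : i = j := by omega
          exact h⟩
      · refine ⟨j+1, le_rfl, fun i hi => ?_, fun i hi him => by omega⟩
        rcases Nat.lt_or_ge i j with h' | h'
        · exact h1 i h'
        · obtain rfl : i = j := by omega
          exact h

/-- Insert `x` at position `j` of the sequence `z`. -/
noncomputable def insertAt (z : ℕ → ℝ) (j : ℕ) (x : ℝ) (i : ℕ) : ℝ :=
  if i < j then z i else if i = j then x else z (i - 1)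

lemma insertAt_lt {z : ℕ → ℝ} {j i : ℕ} {x : ℝ} (h : i < j) : insertAt z j x i = z i := by
  simp [insertAt, h]
lemma insertAt_self {z : ℕ → ℝ} {j : ℕ} {x : ℝ} : insertAt z j x j = x := by
  simp [insertAt]
lemma insertAt_gt {z : ℕ → ℝ} {j i : ℕ} {x : ℝ} (h : j ≤ i) : insertAt z j x (i+1) = z i := by
  have h1 : ¬ (i + 1 < j) := by omega
  have h2 : ¬ (i + 1 = j) := by omega
  simp [insertAt, h1, h2]

lemma insertAt_dec {z : ℕ → ℝ} {j m : ℕ} {x : ℝ} (hz : ∀ i, i + 1 < m → z (i+1) < z i)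
    (h1 : ∀ i < j, x < z i) (h2 : ∀ i, j ≤ i → i < m → z i < x) (hj : j ≤ m) :
    ∀ i < m, insertAt z j x (i+1) < insertAt z j x i := by
  intro i hi
  rcases lt_trichotomy i j with h | h | h
  · rw [insertAt_lt h]
    rcases Nat.lt_or_ge (i+1) j with h' | h'
    · rw [insertAt_lt h']; exact hz i (by omega)
    · obtain rfl : j = i + 1 := by omega
      rw [insertAt_self]; exact h1 i h
  · subst h
    rw [insertAt_self, insertAt_gt le_rfl]; exact h2 i le_rfl hi
  · obtain ⟨l, rfl⟩ : ∃ l, i = l + 1 := ⟨i - 1, by omega⟩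
    rw [insertAt_gt (by omega), insertAt_gt (by omega)]
    exact hz l hi

lemma insertAt_mem {z : ℕ → ℝ} {j m : ℕ} {x : ℝ} (hz : ∀ i < m, z i ∈ Icc (-1:ℝ) 1)
    (hx : x ∈ Icc (-1:ℝ) 1) (hj : j ≤ m) : ∀ i ≤ m, insertAt z j x i ∈ Icc (-1:ℝ) 1 := by
  intro i hi
  rcases lt_trichotomy i j with h | h | h
  · rw [insertAt_lt h]; exact hz i (by omega)
  · subst h; rw [insertAt_self]; exact hx
  · obtain ⟨l, rfl⟩ : ∃ l, i = l + 1 := ⟨i - 1, by omega⟩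
    rw [insertAt_gt (by omega)]; exact hz l hi

/-- A double zero does not cost an alternation: the second derivative alternates as often. -/
lemma alt_double_zero {φ φ₁ φ₂ : ℝ → ℝ}
    (h1 : ∀ x ∈ Icc (-1:ℝ) 1, HasDerivWithinAt φ (φ₁ x) (Icc (-1:ℝ) 1) x)
    (h2 : ∀ x ∈ Icc (-1:ℝ) 1, HasDerivWithinAt φ₁ (φ₂ x) (Icc (-1:ℝ) 1) x)
    {x : ℝ} (hx : x ∈ Icc (-1:ℝ) 1) (hφ : φ x = 0) (hφ₁ : φ₁ x = 0) {m : ℕ} {ε : ℝ}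
    (h : Alt φ m ε) : Alt φ₂ m ε := by
  obtain ⟨z, hz, hm, hs⟩ := h
  obtain ⟨j, hj, hl, hr⟩ := exists_split (x := x) hz (fun i hi e => by
    have := hs i hi; rw [e, hφ] at this; simp at this)
  obtain ⟨b, hb, hb'⟩ := mvt_points h1 (insertAt_mem hm hx hj) (insertAt_dec hz hl hr hj)
  -- signs of the first derivative
  have sgnl : ∀ i < j, 0 < ε * (-1)^i * φ₁ (b i) := by
    intro i hi
    refine pos_of_mul_diff (sub_pos.2 (insertAt_dec hz hl hr hj i (by omega))) (hb' i (by omega)) ?_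
    rw [insertAt_lt hi]
    have s1 := hs i (by omega)
    rcases Nat.lt_or_ge (i+1) j with h' | h'
    · rw [insertAt_lt h']
      have s2 := hs (i+1) (by omega)
      rw [pow_succ] at s2
      nlinarith
    · obtain rfl : j = i + 1 := by omega
      rw [insertAt_self, hφ]; simpa using s1
  have sgnr : ∀ i, j ≤ i → i < m → 0 < ε * (-1)^(i+1) * φ₁ (b i) := by
    intro i hi him
    refine pos_of_mul_diff (sub_pos.2 (insertAt_dec hz hl hr hj i (by omega))) (hb' i (by omega)) ?_
    rw [insertAt_gt hi]
    have s1 := hs i (by omega)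
    rcases Nat.lt_or_ge j i with h' | h'
    · obtain ⟨l, rfl⟩ : ∃ l, i = l + 1 := ⟨i - 1, by omega⟩
      rw [insertAt_gt (by omega)]
      have s2 := hs l (by omega)
      rw [pow_succ] at s1 ⊢
      rw [pow_succ]
      nlinarith
    · obtain rfl : j = i := by omega
      rw [insertAt_self, hφ, pow_succ]; nlinarith
  have hbm : ∀ i < m, b i ∈ Icc (-1:ℝ) 1 := fun i hi =>
    ⟨by linarith [(hb i hi).1, (insertAt_mem hm hx hj (i+1) hi).1],
     by linarith [(hb i hi).2, (insertAt_mem hm hx hj i hi.le).2]⟩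
  have hbd : ∀ i, i + 1 < m → b (i+1) < b i := fun i hi =>
    (hb (i+1) hi).2.trans (hb i (by omega)).1
  have hbl : ∀ i < j, x < b i := by
    intro i hi
    refine lt_of_le_of_lt ?_ (hb i (by omega)).1
    rcases Nat.lt_or_ge (i+1) j with h' | h'
    · rw [insertAt_lt h']; exact (hl _ h').le
    · obtain rfl : j = i + 1 := by omega
      rw [insertAt_self]
  have hbr : ∀ i, j ≤ i → i < m → b i < x := by
    intro i hi him
    refine lt_of_lt_of_le (hb i him).2 ?_
    rcases Nat.lt_or_ge j i with h' | h'
    · obtain ⟨l, rfl⟩ : ∃ l, i = l + 1 := ⟨i - 1, by omega⟩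
      rw [insertAt_gt (by omega)]; exact (hr l (by omega) (by omega)).le
    · obtain rfl : j = i := by omega
      rw [insertAt_self]
  have sg : ∀ i ≤ m, 0 ≤ ε * (-1)^i * φ₁ (insertAt b j x i) ∧
      (i ≠ j → 0 < ε * (-1)^i * φ₁ (insertAt b j x i)) := by
    intro i hi
    rcases lt_trichotomy i j with h | h | h
    · rw [insertAt_lt h]; exact ⟨(sgnl i h).le, fun _ => sgnl i h⟩
    · subst h; rw [insertAt_self, hφ₁]; simp
    · obtain ⟨l, rfl⟩ : ∃ l, i = l + 1 := ⟨i - 1, by omega⟩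
      rw [insertAt_gt (by omega)]
      have := sgnr l (by omega) (by omega)
      exact ⟨this.le, fun _ => this⟩
  refine alt_of_diff h2 (insertAt_mem hbm hx hj) (insertAt_dec hbd hbl hbr hj) ?_
  intro i hi
  obtain ⟨p1, p2⟩ := sg i hi.le
  obtain ⟨q1, q2⟩ := sg (i+1) hi
  rw [pow_succ] at q1 q2
  by_cases hij : i = j
  · have := q2 (by omega)
    nlinarith
  · have := p2 hij
    nlinarith

/-- Key contradiction lemma with a double zero. -/
lemma hermite_contra {D : ℕ → ℝ → ℝ} {m : ℕ} (hm : 1 ≤ m) (hD : Tow (m+1) D) {x : ℝ}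
    (hx : x ∈ Icc (-1:ℝ) 1) (h0 : D 0 x = 0) (h1 : D 1 x = 0) {ε : ℝ} (h : Alt (D 0) m ε) :
    ∃ ξ ∈ Icc (-1:ℝ) 1, 0 < ε * D (m+1) ξ := by
  have h2 : Alt (D 2) m ε := alt_double_zero (hD 0 (by omega)) (hD 1 (by omega)) hx h0 h1 h
  obtain ⟨l, rfl⟩ : ∃ l, m = l + 1 := ⟨m - 1, by omega⟩
  have ht : Tow l (fun i => D (i + 2)) := Tow.shift hD
  have := Alt.iter (m := 1) ht l le_rfl (by simpa [add_comm] using h2)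
  exact this.exists

/-- Key contradiction lemma at the end point. -/
lemma endpoint_contra {D : ℕ → ℝ → ℝ} {m : ℕ} (hm : 1 ≤ m) (hD : Tow m D) {ε : ℝ}
    (h1 : ε * D 0 1 ≤ 0) (h : Alt (D 0) m ε) :
    ∃ ξ ∈ Icc (-1:ℝ) 1, ε * D m ξ < 0 := by
  obtain ⟨z, hz, hzm, hs⟩ := h
  have hz0 := hs 0 (by omega)
  simp only [pow_zero, mul_one] at hz0
  have hlt : z 0 < 1 := by
    refine lt_of_le_of_ne (hzm 0 (by omega)).2 (fun e => ?_)
    rw [e] at hz0; linarith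
  have h2 : Alt (D 1) m (-ε) := by
    refine alt_of_diff (a := insertAt z 0 1) (hD 0 (by omega)) (insertAt_mem hzm (by simp) (by omega))
      (insertAt_dec hz (by simp) (fun i _ hi => ?_) (by omega)) ?_
    · clear hs hz0
      induction i with
      | zero => exact hlt
      | succ i ih => exact (hz i hi).trans (ih (by omega) (by omega))
    · intro i hi
      rw [insertAt_gt (by omega)]
      rcases i with _ | i
      · rw [insertAt_self]; simp; linarith
      · rw [insertAt_gt (by omega)]
        have s1 := hs i (by omega)
        have s2 := hs (i+1) (by omega)
        rw [pow_succ] at s2 ⊢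
        nlinarith
  obtain ⟨l, rfl⟩ : ∃ l, m = l + 1 := ⟨m - 1, by omega⟩
  have ht : Tow l (fun i => D (i + 1)) := Tow.shift hD
  obtain ⟨ξ, hξ, h⟩ := (Alt.iter (m := 1) ht l le_rfl (by simpa [add_comm] using h2)).exists
  exact ⟨ξ, hξ, by simpa using h⟩


/-- Derivatives of Chebyshev polynomials. -/
noncomputable def tc (N j : ℕ) (x : ℝ) : ℝ :=
  (derivative^[j] (Polynomial.Chebyshev.T ℝ N)).eval x

lemma tc_hasDeriv (N j : ℕ) (x : ℝ) : HasDerivAt (tc N j) (tc N (j+1) x) x := by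
  have := (derivative^[j] (Polynomial.Chebyshev.T ℝ N)).hasDerivAt x
  rw [← Function.iterate_succ_apply' derivative] at this
  exact this

lemma tc_ode (N j : ℕ) (x : ℝ) : (1 - x^2) * tc N (j+2) x =
    (2*j+1) * x * tc N (j+1) x - ((N:ℝ)^2 - (j:ℝ)^2) * tc N j x := by
  have := Polynomial.Chebyshev.one_sub_X_sq_mul_iterate_derivative_T_eval (R := ℝ) (N:ℤ) j x
  simpa [tc] using this

lemma tc_one_rec (N j : ℕ) : (2*j+1) * tc N (j+1) 1 = ((N:ℝ)^2 - (j:ℝ)^2) * tc N j 1 := by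
  have := tc_ode N j 1
  linarith

lemma tc_zero_one (N : ℕ) : tc N 0 1 = 1 := by simp [tc]

lemma tc_pos_one {N : ℕ} : ∀ {j : ℕ}, j ≤ N → 0 < tc N j 1 := by
  intro j
  induction j with
  | zero => intro _; rw [tc_zero_one]; norm_num
  | succ j ih =>
    intro h
    have h1 := ih (by omega)
    have h2 := tc_one_rec N j
    have h3 : (j:ℝ) + 1 ≤ N := by exact_mod_cast h
    have h4 : 0 < ((N:ℝ)^2 - (j:ℝ)^2) := by nlinarith [(Nat.cast_nonneg j : (0:ℝ) ≤ j)]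
    have : 0 < (2*(j:ℝ)+1) * tc N (j+1) 1 := by rw [h2]; positivity
    exact pos_of_mul_pos_right this (by positivity)

lemma tc_top (N : ℕ) (x : ℝ) : tc N N x = 2^(N-1) * (N.factorial : ℝ) := by
  have hd : (Polynomial.Chebyshev.T ℝ N).natDegree = N := by simp
  have h1 : (derivative^[N] (Polynomial.Chebyshev.T ℝ N)).natDegree = 0 := by
    have := natDegree_iterate_derivative (Polynomial.Chebyshev.T ℝ N) N
    rw [hd] at this; omega
  rw [tc, eq_C_of_natDegree_eq_zero h1, eval_C, coeff_iterate_derivative]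
  have hl : (Polynomial.Chebyshev.T ℝ N).coeff N = 2^(N-1) := by
    have := Polynomial.Chebyshev.leadingCoeff_T ℝ N
    rw [leadingCoeff, hd] at this
    simpa using this
  simp [Nat.descFactorial_self, hl]
  ring

lemma tc_zero {N j : ℕ} (h : N < j) (x : ℝ) : tc N j x = 0 := by
  rw [tc, iterate_derivative_eq_zero (by simpa using h)]; simp

lemma tc_neg (N j : ℕ) (x : ℝ) : tc N j (-x) = (-1)^(N+j) * tc N j x := by
  induction j generalizing x with
  | zero =>
    have := Polynomial.Chebyshev.T_eval_neg (R := ℝ) (N:ℤ) x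
    simp [tc, this]
  | succ j ih =>
    have h1 := (tc_hasDeriv N j (-x)).comp x (hasDerivAt_neg x)
    have h2 := (tc_hasDeriv N j x).const_mul ((-1:ℝ)^(N+j))
    have e : (tc N j) ∘ Neg.neg = fun y => (-1:ℝ)^(N+j) * tc N j y := by
      funext y; exact ih y
    rw [e] at h1
    have := h1.unique h2
    rw [← add_assoc, pow_succ]; linarith

lemma tc_abs_le (N j : ℕ) {x : ℝ} (hx : |x| ≤ 1) : |tc N j x| ≤ tc N j 1 :=
  Polynomial.Chebyshev.abs_iterate_derivative_T_real_le (N:ℤ) j hx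

lemma tc_abs_le_one (N : ℕ) {x : ℝ} (hx : x ∈ Icc (-1:ℝ) 1) : |tc N 0 x| ≤ 1 := by
  simpa [tc_zero_one] using tc_abs_le N 0 (abs_le.2 hx)

lemma tc_node {N i : ℕ} (h : i ≤ N) : tc N 0 (Chebyshev.node N i) = (-1)^i := by
  simpa [tc] using Chebyshev.eval_T_real_node (n := N) (i := i) (by simpa using h)

lemma tc_node_deriv {N i : ℕ} (h0 : 0 < i) (h : i < N) : tc N 1 (Chebyshev.node N i) = 0 := by
  have := Chebyshev.isLocalExtr_T_real (n := N) (k := i) (by omega) h0 h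
  exact this.hasDerivAt_eq_zero (tc_hasDeriv N 0 _)

lemma tc_tow (N n : ℕ) : Tow n (tc N) := fun i _ x _ => (tc_hasDeriv N i x).hasDerivWithinAt

lemma splits_derivative {p : ℝ[X]} (h : p.Splits) : (derivative p).Splits := by
  rw [splits_iff_card_roots] at h ⊢
  have h1 := card_roots_le_derivative p
  have h2 := card_roots' (derivative p)
  have h3 := natDegree_derivative_lt (p := p)
  by_cases h0 : p.natDegree = 0
  · have : derivative p = 0 := derivative_of_natDegree_zero h0
    simp [this]
  · have := h3 h0
    omega

lemma splits_iterate {p : ℝ[X]} (h : p.Splits) (j : ℕ) : (derivative^[j] p).Splits := by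
  induction j with
  | zero => exact h
  | succ j ih => rw [Function.iterate_succ_apply']; exact splits_derivative ih

lemma T_splits (N : ℕ) : (Polynomial.Chebyshev.T ℝ N).Splits := by
  rw [splits_iff_card_roots, Chebyshev.roots_T_real]
  have := Chebyshev.roots_T_real_nodup N
  rw [Finset.image_val, Finset.range_val, Multiset.dedup_eq_self.2 this]
  simp

lemma laguerre {p : ℝ[X]} (h : p.Splits) (x : ℝ) :
    p.eval x * (derivative (derivative p)).eval x ≤ ((derivative p).eval x)^2 := by
  have key : ∀ s : Multiset ℝ, ((s.map (fun a => X - C a)).prod).eval x *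
      (derivative (derivative ((s.map (fun a => X - C a)).prod))).eval x ≤
      ((derivative ((s.map (fun a => X - C a)).prod)).eval x)^2 := by
    intro s
    induction s using Multiset.induction_on with
    | empty => simp
    | cons a s ih =>
      simp only [Multiset.map_cons, Multiset.prod_cons, derivative_mul, derivative_sub,
        derivative_X, derivative_C, sub_zero, one_mul, derivative_add, eval_add, eval_mul,
        eval_sub, eval_X, eval_C]
      generalize eval x (s.map (fun a => X - C a)).prod = q0 at *
      generalize eval x (derivative (s.map (fun a => X - C a)).prod) = q1 at *
      generalize eval x (derivative (derivative (s.map (fun a => X - C a)).prod)) = q2 at *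
      nlinarith [mul_le_mul_of_nonneg_left ih (sq_nonneg (x - a)), sq_nonneg q0]
  rw [h.eq_prod_roots]
  have := key p.roots
  simp only [derivative_C_mul, eval_mul, eval_C]
  nlinarith [mul_le_mul_of_nonneg_left this (sq_nonneg p.leadingCoeff)]

lemma tc_laguerre (N j : ℕ) (x : ℝ) : tc N j x * tc N (j+2) x ≤ (tc N (j+1) x)^2 := by
  have := laguerre (splits_iterate (T_splits N) j) x
  rw [← Function.iterate_succ_apply' derivative, ← Function.iterate_succ_apply' derivative] at this
  exact this

lemma iter_mul_lin (p : ℝ[X]) (a : ℝ) (i : ℕ) : derivative^[i] (p * (X - C a)) =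
    derivative^[i] p * (X - C a) + C (i:ℝ) * derivative^[i-1] p := by
  induction i with
  | zero => simp
  | succ i ih =>
    rw [Function.iterate_succ_apply', ih]
    rcases i with _ | i
    · simp
    · simp only [Nat.add_sub_cancel, derivative_add, derivative_mul, derivative_sub, derivative_X,
        derivative_C, sub_zero, zero_mul, mul_one, zero_add,
        ← Function.iterate_succ_apply' derivative]
      push_cast
      simp only [map_add, map_one]
      ring

/-- If all roots are at most `x`, all derivatives are nonnegative at `x`. -/
lemma splits_nonneg {p : ℝ[X]} (h : p.Splits) (hl : 0 ≤ p.leadingCoeff) {x : ℝ}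
    (hx : ∀ r ∈ p.roots, r ≤ x) (i : ℕ) : 0 ≤ (derivative^[i] p).eval x := by
  have key : ∀ s : Multiset ℝ, (∀ r ∈ s, r ≤ x) → ∀ i,
      0 ≤ (derivative^[i] ((s.map (fun a => X - C a)).prod)).eval x := by
    intro s
    induction s using Multiset.induction_on with
    | empty =>
      intro _ i
      rcases i with _ | i
      · simp
      · simp [Function.iterate_succ_apply]
    | cons a s ih =>
      intro hs i
      have ih' := ih (fun r hr => hs r (by simp [hr]))
      have ha : a ≤ x := hs a (by simp)
      rw [Multiset.map_cons, Multiset.prod_cons, mul_comm, iter_mul_lin]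
      simp only [eval_add, eval_mul, eval_sub, eval_X, eval_C]
      have h1 := mul_nonneg (ih' i) (sub_nonneg.2 ha)
      have h2 := mul_nonneg (Nat.cast_nonneg (α := ℝ) i) (ih' (i-1))
      linarith
  rw [h.eq_prod_roots, iterate_derivative_C_mul, eval_mul, eval_C]
  exact mul_nonneg hl (key _ hx i)

/-- The polynomial `(X-1) T'`. -/
noncomputable def nuP (N : ℕ) : ℝ[X] := derivative (Polynomial.Chebyshev.T ℝ N) * (X - C 1)

/-- Its derivatives. -/
noncomputable def nu (N j : ℕ) (x : ℝ) : ℝ := (x - 1) * tc N (j+1) x + j * tc N j x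

lemma nu_eq (N j : ℕ) (x : ℝ) : (derivative^[j] (nuP N)).eval x = nu N j x := by
  rw [nuP, iter_mul_lin]
  simp only [eval_add, eval_mul, eval_sub, eval_X, eval_C]
  rw [← Function.iterate_succ_apply derivative, ← Function.iterate_succ_apply derivative]
  rcases j with _ | j
  · simp [nu, tc]; ring
  · simp [nu, tc]; ring

lemma nu_laguerre (N j : ℕ) (x : ℝ) : nu N j x * nu N (j+2) x ≤ (nu N (j+1) x)^2 := by
  have hs : (nuP N).Splits := (splits_derivative (T_splits N)).mul (Splits.X_sub_C 1)
  have := laguerre (splits_iterate hs j) x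
  rw [← Function.iterate_succ_apply' derivative, ← Function.iterate_succ_apply' derivative] at this
  simpa only [nu_eq] using this

lemma nu_hasDeriv (N j : ℕ) (x : ℝ) : HasDerivAt (nu N j) (nu N (j+1) x) x := by
  have := (((hasDerivAt_id x).sub_const 1).mul (tc_hasDeriv N (j+1) x)).add
    ((tc_hasDeriv N j x).const_mul (j:ℝ))
  convert! this using 1
  simp [nu]; ring

lemma nu_tow (N n : ℕ) : Tow n (nu N) := fun i _ x _ => (nu_hasDeriv N i x).hasDerivWithinAt

/-- `ω = (2/N)(X²-1)T'` and its derivatives. -/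
noncomputable def om (N j : ℕ) (x : ℝ) : ℝ :=
  (2/N) * ((x^2 - 1) * tc N (j+1) x + 2 * j * x * tc N j x + j * (j-1) * tc N (j-1) x)

lemma om_hasDeriv (N j : ℕ) (x : ℝ) : HasDerivAt (om N j) (om N (j+1) x) x := by
  have h := (((((hasDerivAt_id x).pow 2).sub_const 1).mul (tc_hasDeriv N (j+1) x)).add
    (((hasDerivAt_id x).const_mul (2 * (j:ℝ))).mul (tc_hasDeriv N j x)))
  have h3 : HasDerivAt (fun y => (j:ℝ) * (j-1) * tc N (j-1) y) ((j:ℝ) * (j-1) * tc N j x) x := by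
    rcases j with _ | j
    · simpa using hasDerivAt_const x (0:ℝ)
    · exact (tc_hasDeriv N j x).const_mul _
  convert! (h.add h3).const_mul (2/(N:ℝ)) using 1
  simp only [om, Pi.pow_apply, id, Nat.add_sub_cancel]; push_cast; ring

lemma om_tow (N n : ℕ) : Tow n (om N) := fun i _ x _ => (om_hasDeriv N i x).hasDerivWithinAt

lemma om_top {N : ℕ} (hN : 1 ≤ N) (x : ℝ) : om N (N+1) x = 2^N * ((N+1).factorial : ℝ) := by
  rw [om, tc_zero (by omega), tc_zero (by omega)]
  simp only [Nat.add_sub_cancel, tc_top]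
  have h : (N:ℝ) ≠ 0 := by positivity
  obtain ⟨l, rfl⟩ : ∃ l, N = l + 1 := ⟨N-1, by omega⟩
  rw [Nat.factorial_succ (l+1)]
  simp only [Nat.add_sub_cancel]
  push_cast at *
  field_simp
  ring

lemma om_node {N i : ℕ} (h : i ≤ N) : om N 0 (Chebyshev.node N i) = 0 := by
  rcases Nat.eq_zero_or_pos i with rfl | h0
  · rw [Chebyshev.node_eq_one]; simp [om]
  · rcases Nat.lt_or_ge i N with h1 | h1
    · simp [om, tc_node_deriv h0 h1]
    · obtain rfl : i = N := by omega
      rw [Chebyshev.node_eq_neg_one (by omega)]; simp [om]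

lemma nu_node {N i : ℕ} (h : i < N) : nu N 0 (Chebyshev.node N i) = 0 := by
  rcases Nat.eq_zero_or_pos i with rfl | h0
  · rw [Chebyshev.node_eq_one]; simp [nu]
  · simp [nu, tc_node_deriv h0 h]

/-- Comparison of `T_N` and `T_{N+1}` at 1. -/
lemma tc_succ_one (N : ℕ) : ∀ k ≤ N, tc (N+1) k 1 * ((N:ℝ) * (N + 1 - k)) =
    tc N k 1 * ((N+1) * (N + k)) := by
  intro k
  induction k with
  | zero => intro _; simp [tc_zero_one]; ring
  | succ k ih =>
    intro h
    have h1 := ih (by omega)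
    have h2 := tc_one_rec N k
    have h3 := tc_one_rec (N+1) k
    push_cast at *
    have hp : (2*(k:ℝ)+1) ≠ 0 := by positivity
    have hk : (k:ℝ) + 1 ≤ N := by exact_mod_cast h
    have hq : (N:ℝ) + 1 - k ≠ 0 := by linarith
    apply mul_left_cancel₀ hp
    linear_combination (N:ℝ) * (N + 1 - (k+1)) * h3 - ((N:ℝ)+1)*(N+(k+1)) * h2 +
      (N+1+k)*(N-k)* h1


lemma le_of_deriv_nonneg {g g' : ℝ → ℝ} (hg : ∀ x, HasDerivAt g (g' x) x) {a b : ℝ} (hab : a ≤ b)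
    (h : ∀ x ∈ Icc a b, 0 ≤ g' x) : g a ≤ g b := by
  have : MonotoneOn g (Icc a b) := by
    refine monotoneOn_of_deriv_nonneg (convex_Icc a b)
      (fun x _ => (hg x).continuousAt.continuousWithinAt)
      (fun x _ => (hg x).differentiableAt.differentiableWithinAt) ?_
    intro x hx
    rw [(hg x).deriv]
    exact h x (interior_subset hx)
  exact this (left_mem_Icc.2 hab) (right_mem_Icc.2 hab) hab

lemma tc_pos_ge_one {N : ℕ} : ∀ d j, j + d = N → ∀ x, 1 ≤ x → 0 < tc N j x := by
  intro d
  induction d with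
  | zero =>
    intro j hj x _
    obtain rfl : j = N := by omega
    rw [tc_top]; positivity
  | succ d ih =>
    intro j hj x hx
    have h1 : tc N j 1 ≤ tc N j x := le_of_deriv_nonneg (tc_hasDeriv N j) hx
      (fun y hy => (ih (j+1) (by omega) y hy.1).le)
    exact lt_of_lt_of_le (tc_pos_one (by omega)) h1

lemma zeta_exists {N j : ℕ} (h : j + 1 ≤ N) : ∃ ζ : ℝ, 0 ≤ ζ ∧ ζ < 1 ∧ tc N j ζ = 0 ∧
    ∀ x, ζ ≤ x → ∀ i, j ≤ i → 0 ≤ tc N i x := by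
  set p := derivative^[j] (Polynomial.Chebyshev.T ℝ N) with hp
  have hs : p.Splits := splits_iterate (T_splits N) j
  have hp0 : p ≠ 0 := by
    intro e
    have := tc_pos_one (N := N) (j := j) (by omega)
    rw [tc, ← hp, e] at this; simp at this
  have hdeg : p.degree ≠ 0 := by
    intro e
    have h0 : derivative p = 0 := derivative_of_natDegree_zero (natDegree_eq_of_degree_eq_some e)
    have := tc_pos_one (N := N) (j := j+1) (by omega)
    rw [tc, Function.iterate_succ_apply', ← hp, h0] at this; simp at this
  obtain ⟨r, hr⟩ := hs.exists_eval_eq_zero hdeg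
  have hrm : r ∈ p.roots.toFinset := by simp [hp0, hr]
  have hne : p.roots.toFinset.Nonempty := ⟨r, hrm⟩
  set ζ := p.roots.toFinset.max' hne with hζ
  have hzr : tc N j ζ = 0 := by
    have := p.roots.toFinset.max'_mem hne
    rw [Multiset.mem_toFinset, mem_roots hp0] at this
    exact this
  have hmax : ∀ r, tc N j r = 0 → r ≤ ζ := by
    intro r hr
    exact Finset.le_max' _ _ (by rw [Multiset.mem_toFinset, mem_roots hp0]; exact hr)
  have hlt : ζ < 1 := by
    by_contra hc
    have := tc_pos_ge_one (N := N) (N - j) j (by omega) ζ (not_lt.1 hc)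
    linarith
  have hroots : ∀ r ∈ p.roots, r ≤ ζ := fun r hr => hmax r (by rw [mem_roots hp0] at hr; exact hr)
  have hl : 0 ≤ p.leadingCoeff := by
    by_contra hc
    have h1 : 0 ≤ (derivative^[0] (-p)).eval 1 := splits_nonneg hs.neg (by simp; linarith) (by
      intro r hr; rw [roots_neg] at hr; exact (hroots r hr).trans hlt.le) 0
    have h2 := tc_pos_one (N := N) (j := j) (by omega)
    rw [tc, ← hp] at h2
    simp at h1; linarith
  refine ⟨ζ, ?_, hlt, hzr, ?_⟩
  · have : tc N j (-ζ) = 0 := by rw [tc_neg, hzr, mul_zero]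
    linarith [hmax _ this]
  · intro x hx i hi
    have := splits_nonneg hs hl (fun r hr => (hroots r hr).trans hx) (i - j)
    rw [hp, ← Function.iterate_add_apply, show i - j + j = i by omega] at this
    exact this

/-- A chosen largest root of the `j`-th derivative. -/
structure IsZeta (N j : ℕ) (ζ : ℝ) : Prop where
  nonneg : 0 ≤ ζ
  lt_one : ζ < 1
  root : tc N j ζ = 0
  pos : ∀ x, ζ ≤ x → ∀ i, j ≤ i → 0 ≤ tc N i x

lemma exists_isZeta {N j : ℕ} (h : j + 1 ≤ N) : ∃ ζ, IsZeta N j ζ := by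
  obtain ⟨ζ, h1, h2, h3, h4⟩ := zeta_exists h
  exact ⟨ζ, h1, h2, h3, h4⟩

lemma tc_abs_neg (N j : ℕ) (x : ℝ) : |tc N j (-x)| = |tc N j x| := by
  rw [tc_neg, abs_mul]; simp

lemma tc_abs_abs (N j : ℕ) (x : ℝ) : |tc N j (|x|)| = |tc N j x| := by
  rcases abs_cases x with ⟨h, _⟩ | ⟨h, _⟩
  · rw [h]
  · rw [h, tc_abs_neg]

/-- Energy monotonicity. -/
lemma energy {N j : ℕ} (h : j + 1 ≤ N) {a b : ℝ} (ha : 0 ≤ a) (hab : a ≤ b) :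
    ((N:ℝ)^2 - (j:ℝ)^2) * (tc N j a)^2 + (1 - a^2) * (tc N (j+1) a)^2 ≤
    ((N:ℝ)^2 - (j:ℝ)^2) * (tc N j b)^2 + (1 - b^2) * (tc N (j+1) b)^2 := by
  refine le_of_deriv_nonneg
    (g := fun x => ((N:ℝ)^2 - (j:ℝ)^2) * (tc N j x)^2 + (1 - x^2) * (tc N (j+1) x)^2)
    (g' := fun x => 4 * j * x * (tc N (j+1) x)^2) ?_ hab ?_
  · intro x
    have h1 := ((tc_hasDeriv N j x).pow 2).const_mul ((N:ℝ)^2 - (j:ℝ)^2)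
    have h2 := (((hasDerivAt_id x).pow 2).const_sub 1).mul ((tc_hasDeriv N (j+1) x).pow 2)
    convert! h1.add h2 using 1
    have := tc_ode N j x
    simp only [Pi.pow_apply, id]
    norm_num
    linear_combination (-2 * tc N (j+1) x) * this
  · intro x hx
    have : 0 ≤ x := ha.trans hx.1
    positivity

/-- Claim C. -/
lemma claimC {N j : ℕ} (h1 : 1 ≤ j) (h : j + 1 ≤ N) {ζ : ℝ} (hz : IsZeta N j ζ) :
    (1 - ζ^2) * tc N (j+1) ζ ≤ tc N j 1 := by
  rcases Nat.lt_or_ge 1 j with hj | hj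
  · -- second order Taylor
    set a := tc N (j+1) ζ with ha
    set b := tc N (j+2) ζ with hb
    have ha0 : 0 ≤ a := hz.pos ζ le_rfl _ (by omega)
    have s2 : ∀ x, ζ ≤ x → b ≤ tc N (j+2) x := fun x hx =>
      le_of_deriv_nonneg (tc_hasDeriv N (j+2)) hx (fun y hy => hz.pos y hy.1 _ (by omega))
    have s1 : ∀ x, ζ ≤ x → a + b * (x - ζ) ≤ tc N (j+1) x := by
      intro x hx
      have := le_of_deriv_nonneg (g := fun x => tc N (j+1) x - b * (x - ζ))
        (g' := fun x => tc N (j+2) x - b) (fun y => by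
          convert! (tc_hasDeriv N (j+1) y).sub (((hasDerivAt_id y).sub_const ζ).const_mul b) using 1
          ring) hx (fun y hy => sub_nonneg.2 (s2 y hy.1))
      simp only [sub_self, mul_zero, sub_zero] at this
      linarith
    have s0 := le_of_deriv_nonneg (g := fun x => tc N j x - a * (x - ζ) - b/2 * (x - ζ)^2)
        (g' := fun x => tc N (j+1) x - a - b * (x - ζ)) (fun y => by
          convert! ((tc_hasDeriv N j y).sub (((hasDerivAt_id y).sub_const ζ).const_mul a)).sub
            ((((hasDerivAt_id y).sub_const ζ).pow 2).const_mul (b/2)) using 1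
          simp; ring) hz.lt_one.le (fun y hy => by linarith [s1 y hy.1])
    simp only [sub_self, mul_zero, sub_zero, hz.root] at s0
    norm_num at s0
    have ode := tc_ode N j ζ
    rw [hz.root, mul_zero, sub_zero, ← ha, ← hb] at ode
    have hz0 := hz.nonneg
    have hz1 := hz.lt_one
    have hj' : (2:ℝ) ≤ j := by exact_mod_cast hj
    -- (1+ζ) * target
    have key : (1 + ζ) * ((1 - ζ^2) * a) ≤ (1 + ζ) * (a * (1 - ζ) + b/2 * (1-ζ)^2) := by
      have e : (1 + ζ) * (b/2 * (1-ζ)^2) = (1 - ζ)/2 * ((2*j+1) * ζ * a) := by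
        rw [← ode]; ring
      have : 0 ≤ (1 - ζ) * a * (ζ * ((2*j+1)/2 - 1 - ζ)) := by
        apply mul_nonneg (mul_nonneg (by linarith) ha0)
        apply mul_nonneg hz0; linarith
      nlinarith
    have := le_of_mul_le_mul_left key (by linarith)
    linarith
  · obtain rfl : j = 1 := by omega
    have ode := tc_ode N 0 ζ
    rw [hz.root] at ode
    have r1 := tc_one_rec N 0
    rw [tc_zero_one] at r1
    norm_num at ode r1
    rw [ode, r1]
    have := (abs_le.1 (tc_abs_le_one N (x := ζ) ⟨by linarith [hz.nonneg], hz.lt_one.le⟩)).1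
    nlinarith [sq_nonneg (N:ℝ)]

/-- Bound for the lower derivative in the central zone. -/
lemma central_y {N k : ℕ} (h : k + 2 ≤ N) {ζ : ℝ} (hz : IsZeta N (k+1) ζ) {x : ℝ} (hx : |x| ≤ ζ) :
    ((N:ℝ)^2 - (k:ℝ)^2) * |tc N k x| ≤ tc N (k+1) 1 := by
  have hk : (k:ℝ) + 2 ≤ N := by exact_mod_cast h
  have hL : 0 < (N:ℝ)^2 - (k:ℝ)^2 := by nlinarith [(Nat.cast_nonneg k : (0:ℝ) ≤ k)]
  have he := energy (N := N) (j := k) (by omega) (abs_nonneg x) hx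
  rw [hz.root] at he
  have hx1 : |x|^2 ≤ 1 := by nlinarith [abs_nonneg x, hz.lt_one]
  have h1 : (tc N k |x|)^2 ≤ (tc N k ζ)^2 := by
    have : 0 ≤ (1 - |x|^2) * (tc N (k+1) |x|)^2 := mul_nonneg (by linarith) (sq_nonneg _)
    have : ((N:ℝ)^2 - (k:ℝ)^2) * (tc N k |x|)^2 ≤ ((N:ℝ)^2 - (k:ℝ)^2) * (tc N k ζ)^2 := by
      nlinarith
    exact le_of_mul_le_mul_left this hL
  have h2 := sq_le_sq.1 h1
  rw [tc_abs_abs] at h2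
  have hc := claimC (by omega) (by omega) hz
  have ode := tc_ode N k ζ
  rw [hz.root] at ode
  have hp : 0 ≤ (1 - ζ^2) * tc N (k+2) ζ :=
    mul_nonneg (by nlinarith [hz.nonneg, hz.lt_one]) (hz.pos ζ le_rfl _ (by omega))
  have e : ((N:ℝ)^2 - (k:ℝ)^2) * |tc N k ζ| = (1 - ζ^2) * tc N (k+2) ζ := by
    rw [← abs_of_pos hL, ← abs_mul, ← abs_of_nonneg hp, ode]
    simp [abs_of_pos hL]
  calc _ ≤ ((N:ℝ)^2 - (k:ℝ)^2) * |tc N k ζ| := mul_le_mul_of_nonneg_left h2 hL.le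
    _ ≤ _ := by rw [e]; exact hc

lemma tc_pred_top (N : ℕ) (x : ℝ) : tc (N+1) N x = x * tc (N+1) (N+1) 1 := by
  have h := tc_ode (N+1) N x
  rw [tc_zero (by omega), tc_top] at h
  rw [tc_top]
  push_cast at h
  have : (2*(N:ℝ)+1) ≠ 0 := by positivity
  apply mul_left_cancel₀ this
  push_cast
  linear_combination h

/-- F7. -/
lemma central_u {N k : ℕ} (h1 : 1 ≤ k) (h : k + 1 ≤ N) {ζ : ℝ} (hz : IsZeta N k ζ) {x : ℝ}
    (hx : |x| ≤ ζ) : (2*k+1) * |tc N k x| ≤ tc N k 1 := by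
  rcases Nat.lt_or_ge (k+1) N with hk | hk
  · obtain ⟨ξ, hξ⟩ := exists_isZeta (N := N) (j := k+1) (by omega)
    have hk' : (k:ℝ) + 1 < N := by exact_mod_cast hk
    have hL : 0 < (N:ℝ)^2 - (k:ℝ)^2 := by nlinarith [(Nat.cast_nonneg k : (0:ℝ) ≤ k)]
    have r1 := tc_one_rec N k
    have base : ∀ y, |y| ≤ ξ → (2*k+1) * |tc N k y| ≤ tc N k 1 := by
      intro y hy
      have := central_y (by omega) hξ hy
      have h2 : ((N:ℝ)^2 - (k:ℝ)^2) * ((2*k+1) * |tc N k y|) ≤ ((N:ℝ)^2 - (k:ℝ)^2) * tc N k 1 := by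
        rw [← r1]
        calc _ = (2*(k:ℝ)+1) * (((N:ℝ)^2 - (k:ℝ)^2) * |tc N k y|) := by ring
          _ ≤ _ := mul_le_mul_of_nonneg_left this (by positivity)
      exact le_of_mul_le_mul_left h2 hL
    rcases le_total |x| ξ with hc | hc
    · exact base x hc
    · have m1 : tc N k ξ ≤ tc N k |x| := le_of_deriv_nonneg (tc_hasDeriv N k) hc
        (fun y hy => hξ.pos y hy.1 _ le_rfl)
      have m2 : tc N k |x| ≤ tc N k ζ := le_of_deriv_nonneg (tc_hasDeriv N k) hx
        (fun y hy => hξ.pos y (hc.trans hy.1) _ le_rfl)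
      rw [hz.root] at m2
      have b := base ξ (by rw [abs_of_nonneg hξ.nonneg])
      rw [← tc_abs_abs, abs_of_nonpos m2]
      rw [abs_of_nonpos (m1.trans m2)] at b
      refine le_trans ?_ b
      exact mul_le_mul_of_nonneg_left (by linarith) (by positivity)
  · obtain rfl : N = k + 1 := by omega
    have := hz.root
    rw [tc_pred_top] at this
    have hp := tc_pos_one (N := k+1) (j := k+1) le_rfl
    have hz0 : ζ = 0 := by
      rcases mul_eq_zero.1 this with h | h
      · exact h
      · linarith
    rw [hz0] at hx
    have hx0 : x = 0 := abs_nonpos_iff.1 hx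
    rw [hx0, tc_pred_top]; simp
    exact (tc_pos_one (by omega)).le

lemma nondeg {N k : ℕ} (h : k + 1 ≤ N) {x : ℝ} (hx : 0 < 1 - x^2) :
    ¬ (tc N k x = 0 ∧ tc N (k+1) x = 0) := by
  rintro ⟨h0, h1⟩
  have : ∀ i, tc N (k+i) x = 0 ∧ tc N (k+i+1) x = 0 := by
    intro i
    induction i with
    | zero => exact ⟨h0, h1⟩
    | succ i ih =>
      refine ⟨ih.2, ?_⟩
      have ode := tc_ode N (k+i) x
      rw [ih.1, ih.2, mul_zero, mul_zero, sub_zero] at ode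
      rcases mul_eq_zero.1 ode with h | h
      · linarith
      · exact h
  have h2 := (this (N-k)).1
  rw [show k + (N-k) = N by omega, tc_top] at h2
  have : (0:ℝ) < 2^(N-1) * (N.factorial : ℝ) := by positivity
  linarith


/-- The constant `γ`. -/
noncomputable def gam (N K : ℝ) : ℝ := K * (2*N+1) / (2*(N+1-K))

lemma gam_bound {N K : ℝ} (hK : 1 ≤ K) (hN : K + 1 ≤ N) :
    K*(K-1)/(N^2-(K-1)^2) + K * (N/(N+1-K)) ≤ gam N K := by
  have h1 : 0 < N+1-K := by linarith
  have h2 : 0 < N+K-1 := by linarith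
  have e : N^2-(K-1)^2 = (N+1-K)*(N+K-1) := by ring
  have : gam N K - (K*(K-1)/(N^2-(K-1)^2) + K * (N/(N+1-K))) =
      K * (N - K + 1) / (2 * (N+1-K)*(N+K-1)) := by
    rw [e, gam]; field_simp; ring
  have h3 : 0 ≤ K * (N - K + 1) / (2 * (N+1-K)*(N+K-1)) := by
    apply div_nonneg
    · apply mul_nonneg <;> linarith
    · positivity
  linarith

lemma one_le_ratio {N K : ℝ} (hK : 1 ≤ K) (hN : K + 1 ≤ N) : 1 ≤ N/(N+1-K) := by
  rw [le_div_iff₀ (by linarith)]; linarith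

/-- Case `v ≤ 0`: bound on `e = -w c`. -/
lemma case2_e {K M x u w c : ℝ} (hx1 : -1 < x) (hM : 0 ≤ M) (hu : 0 ≤ u)
    (hw : 0 ≤ w) (hv : K * u - (1-x) * w ≤ 0)
    (hc : c * (M*u + (1+K*(1-x))*w) = (1+x) * (K*u - (1-x)*w))
    (hD : 0 < M*u + (1+K*(1-x))*w) :
    c ≤ 0 ∧ (-(c * w)) * (1 + K*(1-x)) ≤ (1+x) * ((1-x)*w - K*u) := by
  have hc0 : c ≤ 0 := by
    by_contra h
    have := mul_pos (not_le.1 h) hD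
    nlinarith
  refine ⟨hc0, ?_⟩
  have : 0 ≤ (-c) * (M*u) := mul_nonneg (by linarith) (by positivity)
  nlinarith

lemma c2_key1 {N q u e : ℝ} (hN0 : 0 < N) (hN2 : 2 ≤ N) (hq0 : 0 < q) (hq2 : q < 2) (hu : 0 ≤ u) (hu1 : u ≤ 1)
    (hu3 : 3*u ≤ 1) (he1 : e * (1+q) ≤ 1 - u) (h : 3 ≤ N ∨ u = 0) :
    (2/N) * (q*u + 2*(q*e) - 1) ≤ 1 - (u+e) := by
  have hN0' : 0 < 2 / N := by positivity
  have h1 : (q*u + 2*(q*e) - 1) * (1+q) ≤ (q-1)*(1+u*q) := by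
    have := mul_le_mul_of_nonneg_left he1 hq0.le
    linarith
  have h2 : (1-u)*q ≤ (1 - (u+e)) * (1+q) := by linarith
  have h3 : (2/N) * ((q-1)*(1+u*q)) ≤ (1-u)*q := by
    rw [div_mul_eq_mul_div, div_le_iff₀ hN0]
    rcases h with h | h
    · have hu3 : u ≤ 1/3 := by linarith
      have s1 : 2*((q-1)*(1+u*q)) ≤ (1-u)*q*3 := by
        nlinarith [mul_nonneg hu hq0.le, mul_nonneg (mul_nonneg hu hq0.le) (by linarith : 0 ≤ 2 - q), mul_nonneg (sub_nonneg.2 hu3) hq0.le]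
      have s2 : (1-u)*q*3 ≤ (1-u)*q*N := mul_le_mul_of_nonneg_left h (mul_nonneg (by linarith) hq0.le)
      linarith
    · subst h
      have : 0 < q * N := by positivity
      nlinarith
  have h4 : (2/N) * (q*u + 2*(q*e) - 1) * (1+q) ≤ (1 - (u+e)) * (1+q) := by
    calc _ = (2/N) * ((q*u + 2*(q*e) - 1) * (1+q)) := by ring
      _ ≤ (2/N) * ((q-1)*(1+u*q)) := mul_le_mul_of_nonneg_left h1 hN0'.le
      _ ≤ _ := h3.trans h2
  exact le_of_mul_le_mul_right h4 (by linarith)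

lemma c2_key2 {K q u e : ℝ} (hK2 : 2 ≤ K) (hq0 : 0 < q) (hq2 : q < 2) (hu : 0 ≤ u) (hu1 : u ≤ 1)
    (he1 : e * (1+K*q) ≤ 1 - u*(1+(K-1)*q)) :
    (K*q*u + (K+1)*(q*e)) * (1+K*q) ≤ K * (1+K*q) := by
  have a1 : (K+1)*q*(e*(1+K*q)) ≤ (K+1)*q*(1 - u*(1+(K-1)*q)) :=
    mul_le_mul_of_nonneg_left he1 (by positivity)
  have a2 : q * (K+1+u*(q-1)) ≤ K + K^2*q := by
    have : u * (q-1) ≤ 1 := by nlinarith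
    nlinarith [mul_le_mul_of_nonneg_left this hq0.le, mul_nonneg (mul_nonneg hq0.le (by linarith : 0 ≤ K - 2)) (by linarith : 0 ≤ K + 1)]
  linarith

set_option maxHeartbeats 1000000 in
lemma central_case2 {N K x y u w c : ℝ} (hK : 1 ≤ K) (hK' : K = 1 ∨ 2 ≤ K) (hN : K + 1 ≤ N)
    (hN3 : K = 1 → 3 ≤ N ∨ u = 0) (hx1 : -1 < x) (hx2 : x < 1) (hu : 0 ≤ u)
    (hw : 0 ≤ w) (hu2 : (2*K+1)*u ≤ 1)
    (hy : (N^2-(K-1)^2) * |y| ≤ 1)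
    (hode : (N^2-(K-1)^2) * y = (2*K-1)*x*u - (1-x^2)*w)
    (hv : K * u - (1-x) * w ≤ 0)
    (hc : c * ((N^2-K^2)*u + (1+K*(1-x))*w) = (1+x) * (K*u - (1-x)*w))
    (hD : 0 < (N^2-K^2)*u + (1+K*(1-x))*w) :
    u - c*w ≤ 1 ∧ (u - c*w) + (2/N) * (-(K*((K-1)*y - (1-x)*u) - (K+1)*(K*u - (1-x)*w)*c)) ≤
      1 + (2/N) * gam N K := by
  have hM : 0 ≤ N^2-K^2 := by nlinarith
  obtain ⟨hc0, he⟩ := case2_e hx1 hM hu hw hv hc hD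
  have hL : 0 < N^2-(K-1)^2 := by nlinarith
  have hyl : -1 ≤ (N^2-(K-1)^2) * y := by
    have := neg_abs_le y
    nlinarith
  have hy2 : -y ≤ 1/(N^2-(K-1)^2) := by rw [le_div_iff₀ hL]; linarith
  obtain ⟨q, rfl⟩ : ∃ q, x = 1 - q := ⟨1-x, by ring⟩
  simp only [sub_sub_cancel] at *
  have hq0 : 0 < q := by linarith
  have hq2 : q < 2 := by linarith
  have hKq : 0 < 1 + K*q := by positivity
  set e := -(c*w) with hee
  have he0 : 0 ≤ e := by rw [hee]; nlinarith
  have he1 : e * (1+K*q) ≤ 1 - u*(1+(K-1)*q) := by nlinarith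
  have hu1 : u ≤ 1 := by nlinarith
  have hB : u + e ≤ 1 := by
    have : (u+e) * (1+K*q) ≤ 1 * (1+K*q) := by nlinarith
    exact le_of_mul_le_mul_right this hKq
  have hB' : u - c*w ≤ 1 := by linarith
  refine ⟨hB', ?_⟩
  have hvc : (K*u - q*w)*c ≤ q * e := by
    rw [hee]; nlinarith [mul_nonneg (mul_nonneg (by linarith : (0:ℝ) ≤ K) hu) (neg_nonneg.2 hc0)]
  have hS : -(K*((K-1)*y - q*u) - (K+1)*(K*u - q*w)*c) ≤
      K*(K-1)*(-y) + K*q*u + (K+1)*(q*e) := by nlinarith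
  have hN0 : 0 < N := by linarith
  have hg := gam_bound hK hN
  have hr := one_le_ratio hK hN
  rcases hK' with rfl | hK2
  · norm_num at hS hg he1 hee hr
    have hN0' : 0 < 2 / N := by positivity
    have hg1 : 1 ≤ gam N 1 := by rw [div_self hN0.ne'] at hg; exact hg
    have key := c2_key1 hN0 (by linarith) hq0 hq2 hu hu1 (by linarith : 3*u ≤ 1) he1 (hN3 rfl)
    have hf : (2/N) * (q*u + 2*(q*e) - gam N 1) ≤ (2/N) * (q*u + 2*(q*e) - 1) :=
      mul_le_mul_of_nonneg_left (by linarith) hN0'.le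
    have hf2 : (2/N) * (-(1*((1-1)*y - q*u) - (1+1)*(1*u - q*w)*c)) ≤ (2/N) * (q*u + 2*(q*e)) :=
      mul_le_mul_of_nonneg_left (by norm_num; linarith) hN0'.le
    rw [mul_sub] at key hf
    rw [mul_sub] at hf
    linarith
  · have h1 : K*q*u + (K+1)*(q*e) ≤ K := by
      have := c2_key2 hK2 hq0 hq2 hu hu1 he1
      exact le_of_mul_le_mul_right this hKq
    have h2 : K*(K-1)*(-y) ≤ K*(K-1)/(N^2-(K-1)^2) := by
      rw [div_eq_mul_one_div]
      exact mul_le_mul_of_nonneg_left hy2 (by nlinarith)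
    have h3 : K ≤ K * (N/(N+1-K)) := le_mul_of_one_le_right (by linarith) hr
    have h4 : -(K*((K-1)*y - q*u) - (K+1)*(K*u - q*w)*c) ≤ gam N K := by linarith
    have := mul_le_mul_of_nonneg_left h4 (by positivity : 0 ≤ 2/N)
    linarith

lemma ratio2 {N K : ℝ} (hK : 1 ≤ K) (hN : K + 1 ≤ N) : (K+1)*K*(N+1-K) ≤ N * (N^2-K^2) := by
  obtain ⟨a, rfl⟩ : ∃ a, K = a + 1 := ⟨K-1, by ring⟩
  obtain ⟨b, rfl⟩ : ∃ b, N = a + 2 + b := ⟨N - a - 2, by ring⟩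
  have ha : 0 ≤ a := by linarith
  have hb : 0 ≤ b := by linarith
  rw [← sub_nonneg]
  ring_nf
  positivity

set_option maxHeartbeats 1000000 in
lemma central_case1 {N K x y u w c : ℝ} (hK : 1 ≤ K) (hN : K + 1 ≤ N)
    (hx1 : -1 < x) (hx2 : x < 1) (hu : 0 ≤ u)
    (hw : 0 ≤ w) (hu2 : (2*K+1)*u ≤ 1)
    (hy : (N^2-(K-1)^2) * |y| ≤ 1)
    (hv : 0 ≤ K * u - (1-x) * w)
    (hc : c * ((N^2-K^2)*u + (1+K*(1-x))*w) = (1+x) * (K*u - (1-x)*w))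
    (hD : 0 < (N^2-K^2)*u + (1+K*(1-x))*w) :
    u - c*w ≤ 1 ∧ (u - c*w) + (2/N) * (-(K*((K-1)*y - (1-x)*u) - (K+1)*(K*u - (1-x)*w)*c)) ≤
      1 + (2/N) * gam N K := by
  have hM : 0 < N^2-K^2 := by nlinarith
  have hL : 0 < N^2-(K-1)^2 := by nlinarith
  have hyl : -1 ≤ (N^2-(K-1)^2) * y := by
    have := neg_abs_le y
    nlinarith
  have hy2 : -y ≤ 1/(N^2-(K-1)^2) := by rw [le_div_iff₀ hL]; linarith
  have hc0 : 0 ≤ c := by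
    by_contra h
    have := mul_neg_of_neg_of_pos (not_le.1 h) hD
    nlinarith
  have hu0 : 0 < u := by
    rcases hu.lt_or_eq with h | h
    · exact h
    · exfalso
      subst h
      have hw0 : w = 0 := by nlinarith
      subst hw0
      simp at hD
  have hcM : c * (N^2-K^2) ≤ (1+x)*K := by
    have a1 : 0 ≤ c * ((1+K*(1-x))*w) := mul_nonneg hc0 (mul_nonneg (by nlinarith) hw)
    have a2 : c * (N^2-K^2) * u ≤ (1+x)*K * u := by nlinarith [mul_nonneg (mul_nonneg (by linarith : 0 ≤ 1+x) (by linarith : 0 ≤ 1 - x)) hw]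
    exact le_of_mul_le_mul_right a2 hu0
  have hu3 : u ≤ 1/2 := by nlinarith
  have hB' : u - c*w ≤ 1 := by nlinarith [mul_nonneg hc0 hw]
  refine ⟨hB', ?_⟩
  have hN0 : 0 < N := by linarith
  have hg := gam_bound hK hN
  have hr := one_le_ratio hK hN
  have hvc : (K*u - (1-x)*w)*c ≤ K*u*c := by nlinarith [mul_nonneg (mul_nonneg (by linarith : 0 ≤ 1-x) hw) hc0]
  have hc2 : c ≤ (1+x)*(K/(N^2-K^2)) := by
    rw [← mul_div_assoc, le_div_iff₀ hM]; exact hcM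
  have hr2 : (K+1)*(K/(N^2-K^2)) ≤ N/(N+1-K) := by
    rw [← mul_div_assoc, div_le_div_iff₀ hM (by linarith)]
    exact ratio2 hK hN
  set R := N/(N+1-K) with hR
  have h5 : u * ((1-x) + (K+1)*c) ≤ R := by
    have a1 : (K+1)*c ≤ (1+x)*R := by
      calc (K+1)*c ≤ (K+1)*((1+x)*(K/(N^2-K^2))) := mul_le_mul_of_nonneg_left hc2 (by linarith)
        _ = (1+x)*((K+1)*(K/(N^2-K^2))) := by ring
        _ ≤ _ := mul_le_mul_of_nonneg_left hr2 (by linarith)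
    have a2 : (1-x) ≤ (1-x)*R := by nlinarith
    have a3 : (1-x) + (K+1)*c ≤ 2*R := by linarith
    nlinarith
  have h2 : K*(K-1)*(-y) ≤ K*(K-1)/(N^2-(K-1)^2) := by
    rw [div_eq_mul_one_div]
    exact mul_le_mul_of_nonneg_left hy2 (by nlinarith)
  have h4 : -(K*((K-1)*y - (1-x)*u) - (K+1)*(K*u - (1-x)*w)*c) ≤ gam N K := by
    have b1 : K*(u * ((1-x) + (K+1)*c)) ≤ K*R := mul_le_mul_of_nonneg_left h5 (by linarith)
    have b2 : (K+1)*((K*u - (1-x)*w)*c) ≤ (K+1)*(K*u*c) := mul_le_mul_of_nonneg_left hvc (by linarith)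
    linarith
  have := mul_le_mul_of_nonneg_left h4 (by positivity : 0 ≤ 2/N)
  linarith

/-- value of `S` at 1 -/
lemma S_one_bound {N K : ℝ} (hK : 1 ≤ K) (hN : K + 1 ≤ N) :
    -(gam N K) ≤ K*(K-1)*(2*K-1)/(N^2-(K-1)^2) - K^2*(2*K+1)/(N^2-K^2) := by
  obtain ⟨a, rfl⟩ : ∃ a, K = a + 1 := ⟨K-1, by ring⟩
  obtain ⟨b, rfl⟩ : ∃ b, N = a + 2 + b := ⟨N - a - 2, by ring⟩
  have ha : 0 ≤ a := by linarith
  have hb : 0 ≤ b := by linarith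
  have e1 : (a+2+b)^2 - (a+1-1)^2 = (b+2)*(2*a+2+b) := by ring
  have e2 : (a+2+b)^2 - (a+1)^2 = (b+1)*(2*a+3+b) := by ring
  rw [e1, e2, gam, show a+2+b+1-(a+1) = b+2 by ring]
  have h : 0 ≤ (a+1)*(a+1-1)*(2*(a+1)-1)/((b+2)*(2*a+2+b)) - (a+1)^2*(2*(a+1)+1)/((b+1)*(2*a+3+b)) +
    (a+1)*(2*(a+2+b)+1)/(2*(b+2)) := by
    have : (a+1)*(a+1-1)*(2*(a+1)-1)/((b+2)*(2*a+2+b)) - (a+1)^2*(2*(a+1)+1)/((b+1)*(2*a+3+b)) +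
      (a+1)*(2*(a+2+b)+1)/(2*(b+2)) = (a+1) * (2 * a*(2*a+1)*((b+1)*(2*a+3+b)) - 2*(a+1)*(2*a+3)*((b+2)*(2*a+2+b))
        + (2*a+2*b+5)*((2*a+2+b)*((b+1)*(2*a+3+b)))) / (2*(b+2)*(2*a+2+b)*(b+1)*(2*a+3+b)) := by
      field_simp; ring
    rw [this]
    apply div_nonneg
    · apply mul_nonneg (by linarith)
      ring_nf
      positivity
    · positivity
  linarith

/-- value of `S` at `ζ` -/
lemma S_zeta_bound {N K x y w c : ℝ} (hK : 1 ≤ K) (hN : K + 1 ≤ N) (hx1 : 0 ≤ x) (hx2 : x < 1)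
    (hy : (N^2-(K-1)^2) * |y| ≤ 1) (hw : 0 < w)
    (hode : (N^2-(K-1)^2) * y = - (1-x^2)*w)
    (hc : c * ((1+K*(1-x))*w) = (1+x) * (- (1-x)*w)) :
    -(gam N K) ≤ K*((K-1)*y) - (K+1)*(-(1-x)*w)*c := by
  have hL : 0 < N^2-(K-1)^2 := by nlinarith
  have hyl : -1 ≤ (N^2-(K-1)^2) * y := by
    have := neg_abs_le y
    nlinarith
  have hy2 : -y ≤ 1/(N^2-(K-1)^2) := by rw [le_div_iff₀ hL]; linarith
  have hg := gam_bound hK hN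
  have hr := one_le_ratio hK hN
  have hq : 0 < 1 + K*(1-x) := by nlinarith
  have hc' : c * (1+K*(1-x)) = -((1+x)*(1-x)) := by
    apply mul_right_cancel₀ hw.ne'
    linarith
  have h1 : (K+1)*(-(1-x)*w)*c ≤ 1 := by
    have : (K+1)*(-(1-x)*w)*c * (1+K*(1-x)) ≤ 1 * (1+K*(1-x)) := by
      have e : (K+1)*(-(1-x)*w)*c * (1+K*(1-x)) = (K+1)*(1-x)*((1-x^2)*w) := by
        linear_combination ((K+1)*(-(1-x)*w)) * hc'
      have : (1-x^2)*w ≤ 1 := by linarith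
      rw [e]
      nlinarith [mul_le_mul_of_nonneg_left this (by nlinarith : 0 ≤ (K+1)*(1-x))]
    exact le_of_mul_le_mul_right this hq
  have h2 : K*(K-1)*(-y) ≤ K*(K-1)/(N^2-(K-1)^2) := by
    rw [div_eq_mul_one_div]
    exact mul_le_mul_of_nonneg_left hy2 (by nlinarith)
  have h3 : 1 ≤ K * (N/(N+1-K)) := by nlinarith
  nlinarith


lemma nu_succ_formula (N j : ℕ) (x : ℝ) : (1+x) * nu N (j+1) x =
    ((N:ℝ)^2-(j:ℝ)^2) * tc N j x + (1+j*(1-x)) * tc N (j+1) x := by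
  have := tc_ode N j x
  unfold nu
  push_cast
  linear_combination -this

/-- The quotient `ν_k / ν_{k+1}`. -/
noncomputable def cf (N k : ℕ) (x : ℝ) : ℝ := nu N k x / nu N (k+1) x

/-- The extremal value part. -/
noncomputable def Bf (N k : ℕ) (x : ℝ) : ℝ := tc N k x - cf N k x * tc N (k+1) x

/-- The correction. -/
noncomputable def Sf (N j : ℕ) (x : ℝ) : ℝ :=
  (j+1) * nu N j x - (j+2) * nu N (j+1) x * cf N (j+1) x

lemma nu_pos {N k : ℕ} (h : k + 1 ≤ N) {x ε : ℝ} (hx1 : -1 < x) (hx2 : x < 1)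
    (hε : ε = 1 ∨ ε = -1) (hu : 0 ≤ ε * tc N k x) (hw : 0 ≤ ε * tc N (k+1) x) :
    0 < ε * nu N (k+1) x := by
  have hnd := nondeg h (x := x) (by nlinarith)
  have e := nu_succ_formula N k x
  have hN : (k:ℝ) + 1 ≤ N := by exact_mod_cast h
  have hk : (0:ℝ) ≤ k := Nat.cast_nonneg k
  have hM : 0 < (N:ℝ)^2-(k:ℝ)^2 := by nlinarith
  have hq : 0 < 1+k*(1-x) := by nlinarith
  have hε0 : ε ≠ 0 := by rcases hε with h | h <;> rw [h] <;> norm_num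
  have : 0 < (1+x) * (ε * nu N (k+1) x) := by
    have e2 : (1+x) * (ε * nu N (k+1) x) = ((N:ℝ)^2-(k:ℝ)^2) * (ε * tc N k x)
        + (1+k*(1-x)) * (ε * tc N (k+1) x) := by linear_combination ε * e
    rw [e2]
    rcases hu.lt_or_eq with h1 | h1
    · have := mul_pos hM h1
      have := mul_nonneg hq.le hw
      linarith
    · rcases hw.lt_or_eq with h2 | h2
      · have := mul_pos hq h2
        rw [← h1]; linarith
      · exfalso
        apply hnd
        constructor
        · rcases mul_eq_zero.1 h1.symm with h | h
          · exact absurd h hε0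
          · exact h
        · rcases mul_eq_zero.1 h2.symm with h | h
          · exact absurd h hε0
          · exact h
  exact pos_of_mul_pos_right this (by linarith)

lemma B_nonneg {N k : ℕ} (h : k + 1 ≤ N) {x ε : ℝ} (hx1 : -1 < x) (hx2 : x < 1)
    (hε : ε = 1 ∨ ε = -1) (hu : 0 ≤ ε * tc N k x) (hw : 0 ≤ ε * tc N (k+1) x) :
    0 ≤ ε * Bf N k x := by
  have hv := nu_pos h hx1 hx2 hε hu hw
  have hε2 : ε * ε = 1 := by rcases hε with h | h <;> rw [h] <;> norm_num
  have hv0 : nu N (k+1) x ≠ 0 := by rintro h; rw [h] at hv; simp at hv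
  have hc : cf N k x * nu N (k+1) x = nu N k x := by rw [cf]; field_simp
  have e := nu_succ_formula N k x
  have hL := tc_laguerre N k x
  have ho := tc_ode N k x
  have hb : 0 ≤ (ε * Bf N k x) * ((1+x) * (ε * nu N (k+1) x)) := by
    have e2 : (ε * Bf N k x) * ((1+x) * (ε * nu N (k+1) x)) =
      (ε*ε)*((1-x^2) * ((tc N (k+1) x)^2 - tc N k x * tc N (k+2) x)) + (1+x) * ((ε*tc N k x) * (ε*tc N (k+1) x)) := by
      rw [Bf]
      have hnk : nu N k x = (x-1) * tc N (k+1) x + k * tc N k x := rfl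
      linear_combination (ε*ε)*(-(1+x)*tc N (k+1) x) * (hc + hnk) + (ε*ε)*tc N k x * e + (ε*ε)*tc N k x * ho
    rw [e2, hε2]
    have : 0 ≤ 1 - x^2 := by nlinarith
    have := mul_nonneg this (sub_nonneg.2 hL)
    have := mul_nonneg (by linarith : 0 ≤ 1 + x) (mul_nonneg hu hw)
    linarith
  exact nonneg_of_mul_nonneg_left hb (mul_pos (by linarith) hv)

lemma S_nonpos {N j : ℕ} (h : j + 2 ≤ N) {x ε : ℝ} (hx1 : -1 < x) (hx2 : x < 1)
    (hε : ε = 1 ∨ ε = -1) (hu : 0 ≤ ε * tc N (j+1) x) (hw : 0 ≤ ε * tc N (j+2) x) :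
    ε * Sf N j x ≤ 0 := by
  have hv := nu_pos (k := j+1) h hx1 hx2 hε hu hw
  have hε2 : ε * ε = 1 := by rcases hε with h | h <;> rw [h] <;> norm_num
  have hv0 : nu N (j+1+1) x ≠ 0 := by rintro h; rw [h] at hv; simp at hv
  have hc : cf N (j+1) x * nu N (j+1+1) x = nu N (j+1) x := by rw [cf]; field_simp
  have hL := nu_laguerre N j x
  have hb : (ε * Sf N j x) * (ε * nu N (j+1+1) x) ≤ 0 := by
    have e2 : (ε * Sf N j x) * (ε * nu N (j+1+1) x) = (ε*ε)*((j+1) * (nu N j x * nu N (j+2) x) - (j+2) * (nu N (j+1) x)^2) := by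
      rw [Sf]
      linear_combination (ε*ε)*(-(j+2)*nu N (j+1) x) * hc
    rw [e2, hε2]
    have hj : (0:ℝ) ≤ j := Nat.cast_nonneg j
    nlinarith [sq_nonneg (nu N (j+1) x)]
  by_contra hcon
  have := mul_pos (not_le.1 hcon) hv
  linarith

set_option maxHeartbeats 1000000 in
lemma central_zone {N j : ℕ} (h : j + 2 ≤ N) {x ζ ε : ℝ} (hz : IsZeta N (j+1) ζ) (hx : |x| ≤ ζ)
    (hε : ε = 1 ∨ ε = -1) (hu : 0 ≤ ε * tc N (j+1) x) (hw : 0 ≤ ε * tc N (j+2) x) :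
    ε * Bf N (j+1) x ≤ tc N (j+1) 1 ∧ ε * Bf N (j+1) x + (2/N) * (-(ε * Sf N j x)) ≤
      tc N (j+1) 1 * (1 + (2/N) * gam N (j+1)) := by
  have hx1 : -1 < x := by have := neg_abs_le x; linarith [hz.lt_one]
  have hx2 : x < 1 := by have := le_abs_self x; linarith [hz.lt_one]
  have hU : 0 < tc N (j+1) 1 := tc_pos_one (by omega)
  have hy := central_y h hz hx
  have hu2 := central_u (by omega) (by omega) hz hx
  have hv := nu_pos (k := j+1) h hx1 hx2 hε hu hw
  have hv0 : nu N (j+1+1) x ≠ 0 := by rintro h; rw [h] at hv; simp at hv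
  have hc : cf N (j+1) x * nu N (j+1+1) x = nu N (j+1) x := by rw [cf]; field_simp
  have e := nu_succ_formula N (j+1) x
  have ho := tc_ode N j x
  have hεa : |ε| = 1 := by rcases hε with h | h <;> rw [h] <;> norm_num
  have hN' : ((j:ℝ)+1) + 1 ≤ N := by
    have : (j:ℝ) + 2 ≤ N := by exact_mod_cast h
    linarith
  have hj : (0:ℝ) ≤ j := Nat.cast_nonneg j
  have hN3 : (j:ℝ)+1 = 1 → 3 ≤ (N:ℝ) ∨ ε * tc N (j+1) x / tc N (j+1) 1 = 0 := by
    intro h1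
    have hj0 : j = 0 := by exact_mod_cast (by linarith : (j:ℝ) = 0)
    subst hj0
    rcases Nat.lt_or_ge 2 N with h3 | h3
    · left; exact_mod_cast h3
    · right
      have : N = 2 := by omega
      subst this
      have a1 := tc_pred_top 1 ζ
      have a2 := tc_pred_top 1 x
      have a3 := hz.root
      have a4 : 0 < tc 2 2 1 := tc_pos_one le_rfl
      norm_num at a1 a2 a3
      rw [a3] at a1
      have : ζ = 0 := by
        rcases mul_eq_zero.1 a1.symm with h | h
        · exact h
        · linarith
      rw [this] at hx
      have : x = 0 := abs_nonpos_iff.1 hx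
      rw [this, zero_mul] at a2
      rw [this]
      norm_num [a2]
  have hK' : (j:ℝ)+1 = 1 ∨ 2 ≤ (j:ℝ)+1 := by
    rcases Nat.eq_zero_or_pos j with h | h
    · left; simp [h]
    · right
      have : (1:ℝ) ≤ j := by exact_mod_cast h
      linarith
  push_cast at e hu2
  obtain ⟨Y, hY⟩ : ∃ Y, Y = tc N j x := ⟨_, rfl⟩
  obtain ⟨P, hP⟩ : ∃ Y, Y = tc N (j+1) x := ⟨_, rfl⟩
  obtain ⟨W, hW⟩ : ∃ Y, Y = tc N (j+2) x := ⟨_, rfl⟩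
  obtain ⟨U, hUU⟩ : ∃ Y, Y = tc N (j+1) 1 := ⟨_, rfl⟩
  obtain ⟨c, hcc⟩ : ∃ Y, Y = cf N (j+1) x := ⟨_, rfl⟩
  have hnu : nu N (j+1) x = (x-1) * W + (j+1) * P := by rw [hW, hP, nu]; push_cast; ring
  have hnu0 : nu N j x = (x-1) * P + j * Y := by rw [hP, hY, nu]
  have hB : Bf N (j+1) x = P - c * W := by rw [hP, hcc, hW, Bf]
  have hS : Sf N j x = (j+1) * ((x-1)*P + j*Y) - (j+2) * ((x-1) * W + (j+1) * P) * c := by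
    rw [Sf, hnu, hnu0, hcc]
  rw [hB, hS]
  rw [show j+1+1 = j+2 by ring] at *
  rw [← hP] at hu e ho hu2 hN3
  rw [← hW] at hw e ho
  rw [← hUU] at hU hy hu2 hN3 ⊢
  rw [← hY] at hy ho
  rw [← hcc, hnu] at hc
  have hyn : ((N:ℝ)^2-((j:ℝ)+1-1)^2) * |ε * Y / U| ≤ 1 := by
    rw [abs_div, abs_mul, hεa, abs_of_pos hU, one_mul, ← mul_div_assoc, div_le_one hU]
    rwa [show (j:ℝ)+1-1 = j by ring]
  have hun : (2*((j:ℝ)+1)+1) * (ε * P / U) ≤ 1 := by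
    rw [← mul_div_assoc, div_le_one hU]
    refine le_trans ?_ hu2
    apply mul_le_mul_of_nonneg_left _ (by positivity)
    refine (le_abs_self _).trans ?_
    rw [abs_mul, hεa, one_mul]
  have hcn : c * (((N:ℝ)^2-((j:ℝ)+1)^2)*(ε * P / U) + (1+((j:ℝ)+1)*(1-x))*(ε * W / U)) =
      (1+x) * (((j:ℝ)+1)*(ε * P / U) - (1-x)*(ε * W / U)) := by
    linear_combination (ε/U) * ((-c) * e + (1+x) * hc)
  have hDn : 0 < (((N:ℝ)^2-((j:ℝ)+1)^2)*(ε * P / U) + (1+((j:ℝ)+1)*(1-x))*(ε * W / U)) := by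
    have : (((N:ℝ)^2-((j:ℝ)+1)^2)*(ε * P / U) + (1+((j:ℝ)+1)*(1-x))*(ε * W / U)) = (1+x) * (ε * nu N (j+2) x) / U := by
      linear_combination (ε/U) * (- e)
    rw [this]
    exact div_pos (mul_pos (by linarith) hv) hU
  have hoden : ((N:ℝ)^2-((j:ℝ)+1-1)^2) * (ε * Y / U) = (2*((j:ℝ)+1)-1)*x*(ε*P/U) - (1-x^2)*(ε*W/U) := by
    linear_combination (ε/U) * ho
  have hu0 : 0 ≤ ε * P / U := div_nonneg hu hU.le
  have hw0 : 0 ≤ ε * W / U := div_nonneg hw hU.le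
  have main : ε*P/U - c*(ε*W/U) ≤ 1 ∧ (ε*P/U - c*(ε*W/U)) + (2/N) * (-(((j:ℝ)+1)*(((j:ℝ)+1-1)*(ε * Y / U) - (1-x)*(ε * P / U)) - ((j:ℝ)+1+1)*(((j:ℝ)+1)*(ε * P / U) - (1-x)*(ε * W / U))*c)) ≤
      1 + (2/N) * gam N (j+1) := by
    rcases le_total (((j:ℝ)+1) * (ε * P / U) - (1-x) * (ε * W / U)) 0 with h0 | h0
    · exact central_case2 (by linarith) hK' hN' hN3 hx1 hx2 hu0 hw0 hun hyn hoden h0 hcn hDn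
    · exact central_case1 (by linarith) hN' hx1 hx2 hu0 hw0 hun hyn h0 hcn hDn
  obtain ⟨m1, m2⟩ := main
  have m1' := mul_le_mul_of_nonneg_left m1 hU.le
  have m2' := mul_le_mul_of_nonneg_left m2 hU.le
  constructor
  · calc ε * (P - c*W) = U * (ε*P/U - c*(ε*W/U)) := by field_simp
      _ ≤ U * 1 := m1'
      _ = U := mul_one U
  · refine le_trans (le_of_eq ?_) m2'
    have : (N:ℝ) ≠ 0 := by
      have : (0:ℝ) < N := by linarith
      exact this.ne'
    field_simp
    ring


lemma le_of_deriv_nonneg_on {g g' : ℝ → ℝ} {a b : ℝ} (hg : ∀ x ∈ Icc a b, HasDerivAt g (g' x) x)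
    (hab : a ≤ b) (h : ∀ x ∈ Icc a b, 0 ≤ g' x) : g a ≤ g b := by
  have : MonotoneOn g (Icc a b) := by
    refine monotoneOn_of_deriv_nonneg (convex_Icc a b)
      (fun x hx => (hg x hx).continuousAt.continuousWithinAt)
      (fun x hx => (hg x (interior_subset hx)).differentiableAt.differentiableWithinAt) ?_
    intro x hx
    rw [(hg x (interior_subset hx)).deriv]
    exact h x (interior_subset hx)
  exact this (left_mem_Icc.2 hab) (right_mem_Icc.2 hab) hab

lemma nu_pos_outer {N j : ℕ} (h : j + 2 ≤ N) {ζ : ℝ} (hz : IsZeta N (j+1) ζ) {t : ℝ}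
    (ht : t ∈ Icc ζ 1) : 0 < nu N (j+2) t := by
  rcases ht.2.lt_or_eq with h1 | h1
  · have := nu_pos (k := j+1) h (x := t) (ε := 1) (by linarith [hz.nonneg, ht.1]) h1 (Or.inl rfl)
      (by rw [one_mul]; exact hz.pos t ht.1 _ le_rfl) (by rw [one_mul]; exact hz.pos t ht.1 _ (by omega))
    rwa [one_mul] at this
  · rw [h1, nu]
    have := tc_pos_one (N := N) (j := j+2) h
    have : 0 < ((j+2:ℕ):ℝ) * tc N (j+2) 1 := by positivity
    linarith

lemma Sf_hasDeriv {N j : ℕ} {t : ℝ} (h : nu N (j+2) t ≠ 0) :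
    HasDerivAt (Sf N j) (nu N (j+1) t * (-(j+3) + (j+2) * (nu N (j+1) t * nu N (j+3) t / (nu N (j+2) t)^2))) t := by
  have h0 := nu_hasDeriv N j t
  have h1 := nu_hasDeriv N (j+1) t
  have h2 := nu_hasDeriv N (j+2) t
  have := (h0.const_mul ((j:ℝ)+1)).sub ((h1.const_mul ((j:ℝ)+2)).mul (h1.div h2 h))
  refine HasDerivAt.congr_deriv (f := Sf N j) this ?_
  simp only [Nat.add_assoc, Nat.reduceAdd, Pi.div_apply]
  field_simp
  ring

lemma bracket {N j : ℕ} {t : ℝ} (h : nu N (j+2) t ≠ 0) :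
    -((j:ℝ)+3) + (j+2) * (nu N (j+1) t * nu N (j+3) t / (nu N (j+2) t)^2) ≤ 0 := by
  have hL := nu_laguerre N (j+1) t
  have : nu N (j+1) t * nu N (j+3) t / (nu N (j+2) t)^2 ≤ 1 := by
    rw [div_le_one (by positivity)]; exact hL
  have hj : (0:ℝ) ≤ j := Nat.cast_nonneg j
  nlinarith

lemma nu_mono_outer {N j : ℕ} (h : j + 2 ≤ N) {ζ : ℝ} (hz : IsZeta N (j+1) ζ) {s t : ℝ}
    (hs : ζ ≤ s) (hst : s ≤ t) (ht : t ≤ 1) : nu N (j+1) s ≤ nu N (j+1) t :=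
  le_of_deriv_nonneg (nu_hasDeriv N (j+1)) hst
    (fun y hy => (nu_pos_outer h hz ⟨hs.trans hy.1, hy.2.trans ht⟩).le)

lemma Sf_one {N j : ℕ} (h : j + 2 ≤ N) : -(gam N (j+1)) * tc N (j+1) 1 ≤ Sf N j 1 := by
  have hN' : ((j:ℝ)+1) + 1 ≤ N := by
    have : (j:ℝ) + 2 ≤ N := by exact_mod_cast h
    linarith
  have hj : (0:ℝ) ≤ j := Nat.cast_nonneg j
  have hb := S_one_bound (N := N) (K := (j:ℝ)+1) (by linarith) hN'
  have hU : 0 < tc N (j+1) 1 := tc_pos_one (by omega)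
  have hW : 0 < tc N (j+2) 1 := tc_pos_one h
  have r1 := tc_one_rec N j
  have r2 := tc_one_rec N (j+1)
  have hL : 0 < (N:ℝ)^2-((j:ℝ)+1-1)^2 := by nlinarith
  have hM : 0 < (N:ℝ)^2-((j:ℝ)+1)^2 := by nlinarith
  push_cast at r2
  have hS : Sf N j 1 = ((j:ℝ)+1) * (j * tc N j 1) - (j+1)^2 * (tc N (j+1) 1)^2 / tc N (j+2) 1 := by
    rw [Sf, cf, nu, nu, nu]
    push_cast
    simp only [sub_self, zero_mul, zero_add, Nat.add_assoc, Nat.reduceAdd]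
    field_simp
    ring
  have hY : tc N j 1 = (2*j+1) * tc N (j+1) 1 / ((N:ℝ)^2-((j:ℝ)+1-1)^2) := by
    rw [eq_div_iff hL.ne']
    linear_combination -r1
  have hW' : tc N (j+2) 1 = ((N:ℝ)^2-((j:ℝ)+1)^2) * tc N (j+1) 1 / (2*(j+1)+1) := by
    rw [eq_div_iff (by positivity)]
    linear_combination r2
  have hm := mul_le_mul_of_nonneg_right hb hU.le
  refine hm.trans (le_of_eq ?_)
  rw [hS, hY, hW']
  field_simp
  ring

lemma Sf_zeta {N j : ℕ} (h : j + 2 ≤ N) {ζ : ℝ} (hz : IsZeta N (j+1) ζ) :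
    -(gam N (j+1)) * tc N (j+1) 1 ≤ Sf N j ζ := by
  have hN' : ((j:ℝ)+1) + 1 ≤ N := by
    have : (j:ℝ) + 2 ≤ N := by exact_mod_cast h
    linarith
  have hj : (0:ℝ) ≤ j := Nat.cast_nonneg j
  have hU : 0 < tc N (j+1) 1 := tc_pos_one (by omega)
  have hy := central_y h hz (x := ζ) (by rw [abs_of_nonneg hz.nonneg])
  have h1 : 0 < 1 - ζ^2 := by nlinarith [hz.nonneg, hz.lt_one]
  have hW : 0 < tc N (j+2) ζ := by
    rcases (hz.pos ζ le_rfl (j+2) (by omega)).lt_or_eq with h2 | h2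
    · exact h2
    · exact absurd ⟨hz.root, h2.symm⟩ (nondeg (k := j+1) h h1)
  have hv := nu_pos_outer h hz (t := ζ) ⟨le_rfl, hz.lt_one.le⟩
  have hc : cf N (j+1) ζ * nu N (j+2) ζ = nu N (j+1) ζ := by
    rw [cf]; exact div_mul_cancel₀ _ hv.ne'
  have e := nu_succ_formula N (j+1) ζ
  have ho := tc_ode N j ζ
  have hnu : nu N (j+1) ζ = (ζ-1) * tc N (j+2) ζ := by
    rw [nu, hz.root]; ring
  have hnu0 : nu N j ζ = j * tc N j ζ := by
    rw [nu, hz.root]; ring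
  push_cast at e
  rw [hz.root] at e ho
  rw [hnu] at hc
  simp only [Nat.add_assoc, Nat.reduceAdd] at e
  have hb := S_zeta_bound (N := N) (K := (j:ℝ)+1) (x := ζ) (y := tc N j ζ / tc N (j+1) 1) (w := tc N (j+2) ζ / tc N (j+1) 1)
    (c := cf N (j+1) ζ) (by linarith) hN' hz.nonneg hz.lt_one (by
      rw [abs_div, abs_of_pos hU, ← mul_div_assoc, div_le_one hU]
      rwa [show (j:ℝ)+1-1 = j by ring]) (div_pos hW hU) (by
      linear_combination (1/tc N (j+1) 1) * ho) (by
      linear_combination (1/tc N (j+1) 1) * ((1+ζ) * hc - cf N (j+1) ζ * e))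
  have hm := mul_le_mul_of_nonneg_right hb hU.le
  refine hm.trans (le_of_eq ?_)
  rw [Sf, hnu, hnu0]
  field_simp
  ring

lemma outer_S {N j : ℕ} (h : j + 2 ≤ N) {ζ x : ℝ} (hz : IsZeta N (j+1) ζ) (hx : ζ ≤ x) (hx2 : x < 1) :
    -(gam N (j+1)) * tc N (j+1) 1 ≤ Sf N j x := by
  rcases le_total 0 (nu N (j+1) x) with h0 | h0
  · have := le_of_deriv_nonneg_on (g := fun t => - Sf N j t) (a := x) (b := 1)
      (g' := fun t => -(nu N (j+1) t * (-(j+3) + (j+2) * (nu N (j+1) t * nu N (j+3) t / (nu N (j+2) t)^2))))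
      (fun t ht => (Sf_hasDeriv (nu_pos_outer h hz ⟨hx.trans ht.1, ht.2⟩).ne').neg) hx2.le (fun t ht => by
        have h1 := h0.trans (nu_mono_outer h hz hx ht.1 ht.2)
        have h2 := bracket (nu_pos_outer h hz ⟨hx.trans ht.1, ht.2⟩).ne'
        have := mul_nonneg h1 (neg_nonneg.2 h2)
        linarith)
    have := Sf_one h
    linarith
  · have := le_of_deriv_nonneg_on (g := Sf N j) (a := ζ) (b := x)
      (g' := fun t => (nu N (j+1) t * (-(j+3) + (j+2) * (nu N (j+1) t * nu N (j+3) t / (nu N (j+2) t)^2))))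
      (fun t ht => (Sf_hasDeriv (nu_pos_outer h hz ⟨ht.1, ht.2.trans hx2.le⟩).ne')) hx (fun t ht => by
        have h1 := (nu_mono_outer h hz ht.1 ht.2 hx2.le).trans h0
        have h2 := bracket (nu_pos_outer h hz ⟨ht.1, ht.2.trans hx2.le⟩).ne'
        have := mul_nonneg (neg_nonneg.2 h1) (neg_nonneg.2 h2)
        linarith)
    have := Sf_zeta h hz
    linarith

lemma outer_B {N j : ℕ} (h : j + 2 ≤ N) {ζ x : ℝ} (hz : IsZeta N (j+1) ζ) (hx : ζ ≤ x) (hx2 : x < 1) :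
    Bf N (j+1) x ≤ tc N (j+1) 1 := by
  have hx0 := hz.nonneg.trans hx
  have hN' : ((j:ℝ)+1) + 1 ≤ N := by
    have : (j:ℝ) + 2 ≤ N := by exact_mod_cast h
    linarith
  have hj : (0:ℝ) ≤ j := Nat.cast_nonneg j
  have hU : 0 < tc N (j+1) 1 := tc_pos_one (by omega)
  have hu := hz.pos x hx (j+1) le_rfl
  have hw := hz.pos x hx (j+2) (by omega)
  have hv := nu_pos_outer h hz (t := x) ⟨hx, hx2.le⟩
  have hc : cf N (j+1) x * nu N (j+2) x = nu N (j+1) x := by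
    rw [cf]; exact div_mul_cancel₀ _ hv.ne'
  have e := nu_succ_formula N (j+1) x
  push_cast at e
  simp only [Nat.add_assoc, Nat.reduceAdd] at e
  have hu1 : tc N (j+1) x ≤ tc N (j+1) 1 :=
    (le_abs_self _).trans (tc_abs_le N (j+1) (by rw [abs_of_nonneg hx0]; exact hx2.le))
  have hnu : nu N (j+1) x = (x-1) * tc N (j+2) x + (j+1) * tc N (j+1) x := by
    rw [nu]; push_cast; ring
  rw [Bf]
  simp only [Nat.add_assoc, Nat.reduceAdd]
  rcases le_total 0 (nu N (j+1) x) with h0 | h0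
  · have : 0 ≤ cf N (j+1) x := div_nonneg h0 hv.le
    have := mul_nonneg this hw
    linarith
  · have ho := tc_ode N j x
    have hM : 0 < (N:ℝ)^2-((j:ℝ)+1)^2 := by nlinarith
    have hL : 0 < (N:ℝ)^2-(j:ℝ)^2 := by nlinarith
    obtain ⟨-, he⟩ := case2_e (K := (j:ℝ)+1) (M := (N:ℝ)^2-((j:ℝ)+1)^2) (x := x) (u := tc N (j+1) x) (w := tc N (j+2) x)
      (c := cf N (j+1) x) (by linarith) hM.le hu hw (by rw [hnu] at h0; linarith)
      (by rw [← e]; rw [hnu] at hc; linear_combination (1+x)*hc) (by rw [← e]; exact mul_pos (by linarith) hv)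
    have hy := central_y h hz (x := ζ) (by rw [abs_of_nonneg hz.nonneg])
    have hY : tc N j ζ ≤ tc N j x := le_of_deriv_nonneg (tc_hasDeriv N j) hx (fun t ht => hz.pos t ht.1 _ le_rfl)
    have hY2 : -tc N (j+1) 1 ≤ ((N:ℝ)^2-(j:ℝ)^2) * tc N j x := by
      have a1 := mul_le_mul_of_nonneg_left hY hL.le
      have a2 := mul_le_mul_of_nonneg_left (neg_abs_le (tc N j ζ)) hL.le
      linarith
    have hfin : (tc N (j+1) x - cf N (j+1) x * tc N (j+2) x) * (1 + (j+1)*(1-x)) ≤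
        tc N (j+1) 1 * (1 + (j+1)*(1-x)) := by
      have b1 : (tc N (j+1) x - cf N (j+1) x * tc N (j+2) x) * (1 + (j+1)*(1-x)) ≤
          (1-x) * tc N (j+1) x + tc N (j+1) 1 := by linarith
      have b2 := mul_le_mul_of_nonneg_left hu1 (by linarith : 0 ≤ 1 - x)
      have b3 : 0 ≤ j * (1-x) * tc N (j+1) 1 := by
        apply mul_nonneg (mul_nonneg hj (by linarith)) hU.le
      linarith
    exact le_of_mul_le_mul_right hfin (by nlinarith)

/-- The main inequality. -/
theorem ineqA {N j : ℕ} (h : j + 2 ≤ N) {ζ x ε : ℝ} (hz : IsZeta N (j+1) ζ) (hx1 : -1 < x) (hx2 : x < 1)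
    (hε : ε = 1 ∨ ε = -1) (hu : 0 ≤ ε * tc N (j+1) x) (hw : 0 ≤ ε * tc N (j+2) x)
    (hcase : |x| ≤ ζ ∨ (ζ ≤ x ∧ ε = 1)) {s : ℝ} (hs0 : 0 ≤ s) (hs1 : s ≤ 1) :
    |Bf N (j+1) x - s * (2/N) * Sf N j x| ≤ tc N (j+1) 1 * (1 + s * ((2/N) * gam N (j+1))) := by
  have hB0 := B_nonneg (k := j+1) h hx1 hx2 hε hu hw
  have hS0 := S_nonpos h hx1 hx2 hε hu hw
  have hN0 : 0 ≤ 2 / (N:ℝ) := by positivity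
  have main : ε * Bf N (j+1) x ≤ tc N (j+1) 1 ∧ ε * Bf N (j+1) x + (2/N) * (-(ε * Sf N j x)) ≤
      tc N (j+1) 1 * (1 + (2/N) * gam N (j+1)) := by
    rcases hcase with hc | ⟨hc, rfl⟩
    · exact central_zone h hz hc hε hu hw
    · have a1 := outer_B h hz hc hx2
      have a2 := outer_S h hz hc hx2
      simp only [one_mul]
      refine ⟨a1, ?_⟩
      have := mul_le_mul_of_nonneg_left (neg_le_neg a2) hN0
      linarith
  have hεa : |ε| = 1 := by rcases hε with h | h <;> rw [h] <;> norm_num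
  have e1 : |Bf N (j+1) x - s * (2/N) * Sf N j x| = |ε * Bf N (j+1) x - s * (2/N) * (ε * Sf N j x)| := by
    rw [show ε * Bf N (j+1) x - s * (2/N) * (ε * Sf N j x) = ε * (Bf N (j+1) x - s * (2/N) * Sf N j x) by ring,
      abs_mul, hεa, one_mul]
  rw [e1, abs_of_nonneg]
  · have c1 := mul_le_mul_of_nonneg_left main.1 (by linarith : 0 ≤ 1 - s)
    have c2 := mul_le_mul_of_nonneg_left main.2 hs0
    linarith
  · have := mul_nonneg (mul_nonneg hs0 hN0) (neg_nonneg.2 hS0)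
    linarith


lemma om_split (N j : ℕ) (x : ℝ) :
    om N (j+1) x = (2/N) * ((1+x) * nu N (j+1) x + (j+1) * nu N j x) := by
  rw [om, nu, nu]
  push_cast
  ring

lemma alt_nodes {N r : ℕ} (hr : r ≤ N + 1) {f g : ℝ → ℝ} {l : ℝ}
    (hf : ∀ x ∈ Icc (-1:ℝ) 1, |f x| ≤ 1) (hg : ∀ i < r, g (Chebyshev.node N i) = (-1)^i) (hl1 : |l| < 1) :
    Alt (fun x => l * f x + (-1) * g x) r (-1) := by
  refine ⟨Chebyshev.node (N), fun i hi => Chebyshev.node_lt (by omega) (by omega), fun i hi => Chebyshev.node_mem_Icc, ?_⟩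
  intro i hi
  simp only
  rw [hg i hi]
  have h1 := hf _ (Chebyshev.node_mem_Icc (n := N) (i := i))
  have h2 : |(-1:ℝ)^i * (l * f (Chebyshev.node (N) i))| < 1 := by
    rw [abs_mul, abs_pow, abs_neg, abs_one, one_pow, one_mul, abs_mul]
    calc _ ≤ |l| * 1 := mul_le_mul_of_nonneg_left h1 (abs_nonneg _)
      _ < 1 := by linarith
  have h3 := (abs_lt.1 h2).2
  have h4 : (-1:ℝ)^i * (-1)^i = 1 := by rw [← mul_pow]; norm_num
  have : -1 * (-1:ℝ)^i * (l * f (Chebyshev.node (N) i) + (-1) * (-1)^i) = 1 - (-1:ℝ)^i * (l * f (Chebyshev.node (N) i)) := by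
    linear_combination h4
  rw [this]; linarith

lemma hermite_core {N k : ℕ} (hk : k + 1 ≤ N) {F Q : ℕ → ℝ → ℝ} {σ : ℝ}
    (hF : Tow (N+1) F) (hQ : Tow (N+1) Q)
    (hF0 : ∀ x ∈ Icc (-1:ℝ) 1, |F 0 x| ≤ 1) (hFn : ∀ x ∈ Icc (-1:ℝ) 1, |F (N+1) x| ≤ σ)
    (hQ0 : ∀ i < N, Q 0 (Chebyshev.node N i) = (-1)^i)
    (hQn : ∀ x ∈ Icc (-1:ℝ) 1, Q (N+1) x = -σ) {x : ℝ} (hx : x ∈ Icc (-1:ℝ) 1)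
    (hF1 : F (k+1) x = 0) (hQ1 : Q (k+1) x = 0) : |F k x| ≤ |Q k x| := by
  by_contra hcon
  rw [not_le] at hcon
  have hFk : 0 < |F k x| := (abs_nonneg _).trans_lt hcon
  have hFk0 : F k x ≠ 0 := abs_pos.1 hFk
  obtain ⟨l, hl⟩ : ∃ l, l = Q k x / F k x := ⟨_, rfl⟩
  have hl1 : |l| < 1 := by rw [hl, abs_div, div_lt_one hFk]; exact hcon
  have hlF : l * F k x = Q k x := by rw [hl]; field_simp
  have hH := hF.lin hQ l (-1)
  obtain ⟨m, rfl⟩ : ∃ m, N = m + k := ⟨N - k, by omega⟩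
  have hAlt : Alt (fun x => l * F 0 x + (-1) * Q 0 x) (m+k) (-1) :=
    alt_nodes (by omega) hF0 hQ0 hl1
  have hA2 := Alt.iter hH k (by omega) hAlt
  have hH' : Tow (m+1) (fun i => (fun i x => l * F i x + (-1) * Q i x) (i+k)) :=
    Tow.shift (n := m+1) (m := k) (by rw [show m+1+k = m+k+1 by ring]; exact hH)
  obtain ⟨ξ, hξ, h5⟩ := hermite_contra (m := m) (by omega) hH' hx
    (by simp only [Nat.zero_add]; rw [hlF]; ring) (by simp only [Nat.add_comm 1 k]; rw [hF1, hQ1]; ring)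
    (ε := -1) (by simpa only [Nat.zero_add] using hA2)
  simp only [show m+1+k = m+k+1 by ring] at h5
  rw [hQn ξ hξ] at h5
  have h6 := hFn ξ hξ
  have h7 : |l * F (m+k+1) ξ| ≤ σ := by
    rw [abs_mul]
    have := mul_le_mul hl1.le h6 (abs_nonneg _) (by norm_num)
    linarith
  have := (abs_le.1 h7).1
  linarith

lemma coreA {N j : ℕ} (h : j + 2 ≤ N) {F : ℕ → ℝ → ℝ} {s : ℝ}
    (hF : Tow (N+1) F) 
    (hF0 : ∀ x ∈ Icc (-1:ℝ) 1, |F 0 x| ≤ 1)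
    (hFn : ∀ x ∈ Icc (-1:ℝ) 1, |F (N+1) x| ≤ s * (2^N * ((N+1).factorial : ℝ)))
    {x : ℝ} (hx : x ∈ Icc (-1:ℝ) 1) (hF1 : F (j+2) x = 0) (hv : nu N (j+2) x ≠ 0) :
    |F (j+1) x| ≤ |Bf N (j+1) x - s * (2/N) * Sf N j x| := by
  obtain ⟨μ, hμ⟩ : ∃ μ, μ = (s * om N (j+2) x - tc N (j+2) x) / nu N (j+2) x := ⟨_, rfl⟩
  have hμ1 : μ * nu N (j+2) x = s * om N (j+2) x - tc N (j+2) x := by rw [hμ]; field_simp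
  have hQ := ((tc_tow N (N+1)).lin (om_tow N (N+1)) 1 (-s)).lin (nu_tow N (N+1)) 1 μ
  have := hermite_core (k := j+1) h hF hQ hF0 hFn (fun i hi => by
      rw [tc_node hi.le, om_node hi.le, nu_node hi]; ring) (fun t ht => by
      rw [tc_zero (by omega), om_top (by omega), nu, tc_zero (by omega), tc_zero (by omega)]; ring) hx hF1
      (by simp only [show j+1+1 = j+2 by ring]; rw [hμ1]; ring)
  refine this.trans (le_of_eq ?_)
  congr 1
  have hc : cf N (j+1) x * nu N (j+2) x = nu N (j+1) x := by
    rw [cf]; exact div_mul_cancel₀ _ hv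
  have e1 := om_split N j x
  have e2 := om_split N (j+1) x
  simp only [show j+1+1 = j+2 by ring] at e2
  have hm2 : μ * nu N (j+1) x = cf N (j+1) x * (s * om N (j+2) x - tc N (j+2) x) := by
    rw [← hc, ← hμ1]; ring
  rw [Bf, Sf]
  push_cast at e2
  simp only [show j+1+1 = j+2 by ring]
  linear_combination hm2 - s * e1 + s * cf N (j+1) x * e2 + s * (2/N) * (1+x) * hc


lemma Tow.reflect {n : ℕ} {F : ℕ → ℝ → ℝ} (hF : Tow n F) : Tow n (fun i t => (-1)^i * F i (-t)) := by
  intro i hi x hx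
  have hx' : -x ∈ Icc (-1:ℝ) 1 := ⟨by linarith [hx.2], by linarith [hx.1]⟩
  have h1 := hF i hi (-x) hx'
  have h2 : HasDerivWithinAt (fun t : ℝ => -t) (-1) (Icc (-1:ℝ) 1) x := (hasDerivAt_neg x).hasDerivWithinAt
  have h3 := HasDerivWithinAt.comp x h1 h2 (fun t ht => ⟨by linarith [ht.2], by linarith [ht.1]⟩)
  have h4 := h3.const_mul ((-1:ℝ)^i)
  refine h4.congr_deriv ?_
  simp only [pow_succ]; ring

/-- Towers in the class `W`. -/
structure InW (n : ℕ) (σ : ℝ) (F : ℕ → ℝ → ℝ) : Prop where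
  tow : Tow n F
  le_one : ∀ x ∈ Icc (-1:ℝ) 1, |F 0 x| ≤ 1
  le_top : ∀ x ∈ Icc (-1:ℝ) 1, |F n x| ≤ σ

lemma neg_mem_I {x : ℝ} (hx : x ∈ Icc (-1:ℝ) 1) : -x ∈ Icc (-1:ℝ) 1 :=
  ⟨by linarith [hx.2], by linarith [hx.1]⟩

lemma abs_refl (F : ℕ → ℝ → ℝ) (i : ℕ) (t : ℝ) : |(-1)^i * F i (-t)| = |F i (-t)| := by
  rw [abs_mul, abs_pow, abs_neg, abs_one, one_pow, one_mul]

lemma InW.reflect {n : ℕ} {σ : ℝ} {F : ℕ → ℝ → ℝ} (h : InW n σ F) :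
    InW n σ (fun i t => (-1)^i * F i (-t)) where
  tow := h.tow.reflect
  le_one := fun x hx => by rw [abs_refl]; exact h.le_one _ (neg_mem_I hx)
  le_top := fun x hx => by rw [abs_refl]; exact h.le_top _ (neg_mem_I hx)

lemma thmA_pos {N j : ℕ} (h : j + 2 ≤ N) {F : ℕ → ℝ → ℝ} {s : ℝ} (hs0 : 0 ≤ s) (hs1 : s ≤ 1)
    (hF : InW (N+1) (s * (2^N * ((N+1).factorial : ℝ))) F) {ζ x ε : ℝ} (hz : IsZeta N (j+1) ζ)
    (hx1 : -1 < x) (hx2 : x < 1) (hF1 : F (j+2) x = 0)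
    (hε : ε = 1 ∨ ε = -1) (hu : 0 ≤ ε * tc N (j+1) x) (hw : 0 ≤ ε * tc N (j+2) x)
    (hcase : |x| ≤ ζ ∨ (ζ ≤ x ∧ ε = 1)) :
    |F (j+1) x| ≤ tc N (j+1) 1 * (1 + s * ((2/N) * gam N (j+1))) := by
  have hv := nu_pos (k := j+1) h hx1 hx2 hε hu hw
  have hv0 : nu N (j+2) x ≠ 0 := by
    intro h0
    simp only [show j+1+1 = j+2 by ring] at hv
    rw [h0] at hv; simp at hv
  exact (coreA h hF.tow hF.le_one hF.le_top ⟨hx1.le, hx2.le⟩ hF1 hv0).trans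
    (ineqA h hz hx1 hx2 hε hu hw hcase hs0 hs1)

lemma sign_choice {u w : ℝ} (h : 0 ≤ u * w) : ∃ ε : ℝ, (ε = 1 ∨ ε = -1) ∧ 0 ≤ ε * u ∧ 0 ≤ ε * w := by
  rcases le_total 0 u with hu | hu
  · rcases le_total 0 w with hw | hw
    · exact ⟨1, Or.inl rfl, by linarith, by linarith⟩
    · rcases hu.lt_or_eq with h0 | h0
      · have : w = 0 := by nlinarith
        exact ⟨1, Or.inl rfl, by linarith, by linarith⟩
      · exact ⟨-1, Or.inr rfl, by linarith, by linarith⟩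
  · rcases le_total 0 w with hw | hw
    · rcases hu.lt_or_eq with h0 | h0
      · have : w = 0 := by nlinarith
        exact ⟨-1, Or.inr rfl, by linarith, by linarith⟩
      · exact ⟨1, Or.inl rfl, by linarith, by linarith⟩
    · exact ⟨-1, Or.inr rfl, by linarith, by linarith⟩

/-- Theorem A. -/
theorem thmA {N j : ℕ} (h : j + 2 ≤ N) {F : ℕ → ℝ → ℝ} {s : ℝ} (hs0 : 0 ≤ s) (hs1 : s ≤ 1)
    (hF : InW (N+1) (s * (2^N * ((N+1).factorial : ℝ))) F) {x : ℝ}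
    (hx1 : -1 < x) (hx2 : x < 1) (hF1 : F (j+2) x = 0) :
    |F (j+1) x| ≤ tc N (j+1) 1 * (1 + s * ((2/N) * gam N (j+1))) := by
  obtain ⟨ζ, hz⟩ := exists_isZeta (N := N) (j := j+1) (by omega)
  have hout : ∀ (F : ℕ → ℝ → ℝ) (x : ℝ), InW (N+1) (s * (2^N * ((N+1).factorial : ℝ))) F → -1 < x → x < 1 →
      F (j+2) x = 0 → ζ ≤ x → |F (j+1) x| ≤ tc N (j+1) 1 * (1 + s * ((2/N) * gam N (j+1))) := by
    intro F x hF hx1 hx2 hF1 hx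
    exact thmA_pos h hs0 hs1 hF hz hx1 hx2 hF1 (ε := 1) (Or.inl rfl)
      (by rw [one_mul]; exact hz.pos x hx _ le_rfl) (by rw [one_mul]; exact hz.pos x hx _ (by omega)) (Or.inr ⟨hx, rfl⟩)
  have hcen : ∀ (F : ℕ → ℝ → ℝ) (x : ℝ), InW (N+1) (s * (2^N * ((N+1).factorial : ℝ))) F → -1 < x → x < 1 →
      F (j+2) x = 0 → |x| ≤ ζ → 0 ≤ tc N (j+1) x * tc N (j+2) x →
      |F (j+1) x| ≤ tc N (j+1) 1 * (1 + s * ((2/N) * gam N (j+1))) := by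
    intro F x hF hx1 hx2 hF1 hx hp
    obtain ⟨ε, hε, a, b⟩ := sign_choice hp
    exact thmA_pos h hs0 hs1 hF hz hx1 hx2 hF1 hε a b (Or.inl hx)
  have hFr1 : (fun i t => (-1:ℝ)^i * F i (-t)) (j+2) (-x) = 0 := by
    simp only [neg_neg, hF1, mul_zero]
  have hFr2 : |(fun i t => (-1:ℝ)^i * F i (-t)) (j+1) (-x)| = |F (j+1) x| := by
    simp only [abs_mul, abs_pow, abs_neg, abs_one, one_pow, one_mul, neg_neg]
  rcases le_total |x| ζ with hx | hx
  · rcases le_total 0 (tc N (j+1) x * tc N (j+2) x) with hp | hp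
    · exact hcen F x hF hx1 hx2 hF1 hx hp
    · rw [← hFr2]
      refine hcen _ (-x) hF.reflect (by linarith) (by linarith) hFr1 (by rwa [abs_neg]) ?_
      rw [tc_neg, tc_neg]
      have : (-1:ℝ)^(N+(j+1)) * tc N (j+1) x * ((-1)^(N+(j+2)) * tc N (j+2) x) =
        - (((-1)^(N+(j+1)))*((-1)^(N+(j+1)))) * (tc N (j+1) x * tc N (j+2) x) := by
        rw [show N+(j+2) = N+(j+1)+1 by ring, pow_succ]; ring
      rw [this, ← mul_pow]
      norm_num
      linarith
  · rcases le_total 0 x with h0 | h0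
    · rw [abs_of_nonneg h0] at hx
      exact hout F x hF hx1 hx2 hF1 hx
    · rw [abs_of_nonpos h0] at hx
      rw [← hFr2]
      exact hout _ (-x) hF.reflect (by linarith) (by linarith) hFr1 hx

lemma lower_in {N : ℕ} {s : ℝ} (hs0 : 0 ≤ s) (hs1 : s ≤ 1) :
    InW (N+1) (s * (2^N * ((N+1).factorial : ℝ))) (fun i x => (1-s) * tc N i x + s * tc (N+1) i x) where
  tow := (tc_tow N (N+1)).lin (tc_tow (N+1) (N+1)) (1-s) s
  le_one := fun x hx => by
    have h1 := abs_le.1 (tc_abs_le_one N hx)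
    have h2 := abs_le.1 (tc_abs_le_one (N+1) hx)
    rw [abs_le]
    constructor <;> nlinarith
  le_top := fun x hx => by
    rw [tc_zero (by omega), tc_top, mul_zero, zero_add, Nat.add_sub_cancel]
    rw [abs_of_nonneg (by positivity)]

lemma lower_val {N k : ℕ} (hN : 1 ≤ N) (hk : k ≤ N) (s : ℝ) :
    (1-s) * tc N k 1 + s * tc (N+1) k 1 = tc N k 1 * (1 + s * ((2/N) * gam N k)) := by
  have h1 := tc_succ_one N k hk
  have hN' : (0:ℝ) < N := by exact_mod_cast hN
  have hk' : (k:ℝ) ≤ N := by exact_mod_cast hk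
  have hd : (N:ℝ) + 1 - k ≠ 0 := by
    have : (0:ℝ) < N + 1 - k := by linarith
    exact this.ne'
  have h2 : tc (N+1) k 1 = tc N k 1*((N+1)*(N+k)) / (N * (N+1-k)) := by
    rw [eq_div_iff (by positivity)]; exact h1
  rw [h2, gam]
  field_simp
  ring

lemma bdd_one {N k : ℕ} (hN : 1 ≤ N) (hk : k ≤ N) {s : ℝ} {F : ℕ → ℝ → ℝ}
    (hF : InW (N+1) (s * (2^N * ((N+1).factorial : ℝ))) F) :
    |F k 1| ≤ |tc N k 1 + s * om N k 1| := by
  by_contra hcon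
  rw [not_le] at hcon
  have hQ := (tc_tow N (N+1)).lin (om_tow N (N+1)) 1 s
  have hFk : 0 < |F k 1| := (abs_nonneg _).trans_lt hcon
  have hFk0 : F k 1 ≠ 0 := abs_pos.1 hFk
  obtain ⟨l, hl⟩ : ∃ l, l = (tc N k 1 + s * om N k 1) / F k 1 := ⟨_, rfl⟩
  have hl1 : |l| < 1 := by rw [hl, abs_div, div_lt_one hFk]; exact hcon
  have hlF : l * F k 1 = (tc N k 1 + s * om N k 1) := by rw [hl]; field_simp
  have hH := hF.tow.lin hQ l (-1)
  obtain ⟨m, hm⟩ : ∃ m, N + 1 = m + k := ⟨N + 1 - k, by omega⟩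
  have hA := alt_nodes (N := N) (r := N+1) (g := fun x => 1 * tc N 0 x + s * om N 0 x) le_rfl hF.le_one (fun i hi => by
    rw [tc_node (by omega), om_node (by omega)]; ring) hl1
  rw [hm] at hA
  have hA2 := Alt.iter hH k (by omega) hA
  have hH' := Tow.shift (n := m) (m := k) (by rw [← hm]; exact hH)
  obtain ⟨ξ, hξ, h5⟩ := endpoint_contra (m := m) (by omega) hH' (ε := -1)
    (by simp only [Nat.zero_add]; rw [hlF]; apply le_of_eq; ring) (by simpa only [Nat.zero_add] using hA2)
  simp only [← hm] at h5
  rw [tc_zero (by omega), om_top hN] at h5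
  have h6 := hF.le_top ξ hξ
  have h7 : |l * F (N+1) ξ| ≤ (s * (2^N * ((N+1).factorial : ℝ))) := by
    rw [abs_mul]
    have := mul_le_mul hl1.le h6 (abs_nonneg _) (by norm_num)
    linarith
  have := (abs_le.1 h7).2
  linarith

lemma interior_of_max {g g' : ℝ → ℝ} (hg : ∀ x ∈ Icc (-1:ℝ) 1, HasDerivWithinAt g (g' x) (Icc (-1:ℝ) 1) x)
    {x : ℝ} (hx1 : -1 < x) (hx2 : x < 1) (hmax : ∀ t ∈ Icc (-1:ℝ) 1, |g t| ≤ |g x|) : g' x = 0 := by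
  have hI : Icc (-1:ℝ) 1 ∈ nhds x := Icc_mem_nhds hx1 hx2
  have hd : HasDerivAt g (g' x) x := (hg x ⟨hx1.le, hx2.le⟩).hasDerivAt hI
  have hext : IsLocalExtr g x := by
    rcases le_total 0 (g x) with h0 | h0
    · right
      filter_upwards [hI] with t ht
      have := hmax t ht
      rw [abs_of_nonneg h0] at this
      exact (le_abs_self _).trans this
    · left
      filter_upwards [hI] with t ht
      have := hmax t ht
      rw [abs_of_nonpos h0] at this
      have := neg_abs_le (g t)
      linarith
  exact hext.hasDerivAt_eq_zero hd

/-- Reduction to interior maxima. -/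
lemma reduce_interior {n k : ℕ} (hk : k < n) {σ : ℝ}
    (hinter : ∀ F x, InW n σ F → -1 < x → x < 1 → F (k+1) x = 0 → (∀ t ∈ Icc (-1:ℝ) 1, |F k t| ≤ |F k x|) →
      ∃ G, InW n σ G ∧ |F k x| ≤ |G k 1|) {F : ℕ → ℝ → ℝ} (hF : InW n σ F) {x : ℝ}
    (hx : x ∈ Icc (-1:ℝ) 1) : ∃ G, InW n σ G ∧ |F k x| ≤ |G k 1| := by
  have hcont : ContinuousOn (fun t => |F k t|) (Icc (-1:ℝ) 1) :=
    ContinuousOn.abs (fun t ht => (hF.tow k hk t ht).continuousWithinAt)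
  obtain ⟨x0, hx0, hmax⟩ := isCompact_Icc.exists_isMaxOn (⟨0, by norm_num⟩ : (Icc (-1:ℝ) 1).Nonempty) hcont
  have hmax' : ∀ t ∈ Icc (-1:ℝ) 1, |F k t| ≤ |F k x0| := fun t ht => hmax ht
  have main : ∃ G, InW n σ G ∧ |F k x0| ≤ |G k 1| := by
    rcases hx0.1.lt_or_eq with h1 | h1
    · rcases hx0.2.lt_or_eq with h2 | h2
      · exact hinter F x0 hF h1 h2 (interior_of_max (hF.tow k hk) h1 h2 hmax') hmax'
      · exact ⟨F, hF, by rw [h2]⟩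
    · exact ⟨_, hF.reflect, by rw [abs_refl, h1]⟩
  obtain ⟨G, hG, h⟩ := main
  exact ⟨G, hG, (hmax' x hx).trans h⟩


lemma exists_prim_tower {g : ℝ → ℝ} (hg : Continuous g) (x : ℝ) : ∀ (m : ℕ) (a : ℕ → ℝ), ∃ P : ℕ → ℝ → ℝ,
    P m = g ∧ (∀ i ≤ m, Continuous (P i)) ∧ (∀ i < m, ∀ t, HasDerivAt (P i) (P (i+1) t) t) ∧
    ∀ i < m, P i x = a i := by
  intro m
  induction m with
  | zero =>
    intro a
    exact ⟨fun _ => g, rfl, fun _ _ => hg, fun i hi => absurd hi (by omega), fun i hi => absurd hi (by omega)⟩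
  | succ m ih =>
    intro a
    obtain ⟨P, h1, h2, h3, h4⟩ := ih (fun i => a (i+1))
    have hc : Continuous (P 0) := h2 0 (by omega)
    have hd : ∀ t, HasDerivAt (fun t => a 0 + ∫ u in x..t, P 0 u) (P 0 t) t := fun t =>
      (hc.integral_hasStrictDerivAt x t).hasDerivAt.const_add _
    refine ⟨fun i => Nat.casesOn i (fun t => a 0 + ∫ u in x..t, P 0 u) P, h1, ?_, ?_, ?_⟩
    · intro i hi
      rcases i with _ | i
      · exact continuous_iff_continuousAt.2 (fun t => (hd t).continuousAt)
      · exact h2 i (by omega)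
    · intro i hi t
      rcases i with _ | i
      · exact hd t
      · exact h3 i (by omega) t
    · intro i hi
      rcases i with _ | i
      · simp
      · exact h4 i (by omega)

lemma glue_hasDeriv {f f' p p' : ℝ → ℝ} {x : ℝ} (hx1 : -1 < x) (hx2 : x < 1)
    (hf : ∀ t ∈ Icc (-1:ℝ) 1, HasDerivWithinAt f (f' t) (Icc (-1:ℝ) 1) t)
    (hp : ∀ t, HasDerivAt p (p' t) t) (h0 : f x = p x) (h1 : f' x = p' x) :
    ∀ t ∈ Icc (-1:ℝ) 1, HasDerivWithinAt (fun t => if t ≤ x then f t else p t)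
      (if t ≤ x then f' t else p' t) (Icc (-1:ℝ) 1) t := by
  intro t ht
  rcases lt_trichotomy t x with h | h | h
  · rw [if_pos h.le]
    refine (hf t ht).congr_of_eventuallyEq ?_ (if_pos h.le)
    have : ∀ᶠ y in nhds t, y < x := eventually_lt_nhds h
    filter_upwards [mem_nhdsWithin_of_mem_nhds this] with y hy
    exact if_pos (le_of_lt hy)
  · subst h
    rw [if_pos le_rfl]
    rw [← Icc_union_Icc_eq_Icc hx1.le hx2.le]
    apply HasDerivWithinAt.union
    · refine ((hf t ht).mono (Icc_subset_Icc le_rfl hx2.le)).congr ?_ (if_pos le_rfl)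
      intro y hy
      exact if_pos hy.2
    · rw [h1]
      refine (hp t).hasDerivWithinAt.congr ?_ (by rw [if_pos le_rfl, h0])
      intro y hy
      rcases hy.1.lt_or_eq with h | h
      · exact if_neg (not_le.2 h)
      · rw [← h, if_pos le_rfl, h0]
  · rw [if_neg (not_le.2 h)]
    refine (hp t).hasDerivWithinAt.congr_of_eventuallyEq ?_ (if_neg (not_le.2 h))
    have : ∀ᶠ y in nhds t, x < y := eventually_gt_nhds h
    filter_upwards [mem_nhdsWithin_of_mem_nhds this] with y hy
    exact if_neg (not_le.2 hy)

/-- Comparison: if `|e'| ≤ b'` on `[x,1]`, `e x = 0`, `b x = 0` then `|e| ≤ b`. -/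
lemma comparison {e e' b b' : ℝ → ℝ} {x : ℝ} 
    (he : ∀ t ∈ Icc x 1, HasDerivWithinAt e (e' t) (Icc x 1) t) (hb : ∀ t, HasDerivAt b (b' t) t)
    (h0 : e x = 0) (hb0 : b x = 0) (h : ∀ t ∈ Icc x 1, |e' t| ≤ b' t) : ∀ t ∈ Icc x 1, |e t| ≤ b t := by
  intro t ht
  refine image_norm_le_of_norm_deriv_right_le_deriv_boundary (f := e) (f' := e') (a := x) (b := 1)
    (fun t ht => (he t ht).continuousWithinAt) ?_ (by rw [h0, hb0]; simp) hb (fun t ht => h t ⟨ht.1, ht.2.le⟩) ht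
  intro y hy
  exact (he y ⟨hy.1, hy.2.le⟩).mono_of_mem_nhdsWithin (Icc_mem_nhdsGE_of_mem hy)

/-- Bounding function. -/
noncomputable def bb (σ d x : ℝ) (m : ℕ) (t : ℝ) : ℝ :=
  σ * ((t-x)^m / (m.factorial : ℝ) + (t-x)^(m+1) / (d * ((m+1).factorial : ℝ)))

lemma bb_hasDeriv (σ x : ℝ) {d : ℝ} (hd : d ≠ 0) (m : ℕ) (t : ℝ) :
    HasDerivAt (bb σ d x (m+1)) (bb σ d x m t) t := by
  have h : HasDerivAt (fun t : ℝ => t - x) 1 t := (hasDerivAt_id t).sub_const x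
  have h1 := (h.pow (m+1)).div_const (((m+1).factorial : ℝ))
  have h2 := (h.pow (m+1+1)).div_const (d * ((m+1+1).factorial : ℝ))
  have := (h1.add h2).const_mul σ
  refine HasDerivAt.congr_deriv (f := bb σ d x (m+1)) this ?_
  unfold bb
  rw [Nat.factorial_succ (m+1), Nat.factorial_succ m]
  push_cast
  have : (m.factorial : ℝ) ≠ 0 := by positivity
  have : (m:ℝ) + 1 ≠ 0 := by positivity
  have : (m:ℝ) + 1 + 1 ≠ 0 := by positivity
  field_simp

lemma extension {N : ℕ} {σ : ℝ} (hσ : 0 ≤ σ) {F : ℕ → ℝ → ℝ} (hF : InW (N+1) σ F) {x : ℝ}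
    (hx1 : -1 < x) (hx2 : x < 1) (hF1 : F (N+1) x = 0) :
    ∃ G η, InW (N+1) σ G ∧ η = bb σ (1-x) x (N+1) 1 ∧ G N 1 = (F N x + σ * (1-x) / 2) / (1 + η) := by
  have hd : 0 < 1 - x := by linarith
  obtain ⟨P, hP1, hP2, hP3, hP4⟩ := exists_prim_tower (g := fun t => σ * (t-x)/(1-x)) (by fun_prop) x (N+1) (fun i => F i x)
  have hPx : ∀ i ≤ N+1, F i x = P i x := by
    intro i hi
    rcases hi.lt_or_eq with h | h
    · exact (hP4 i h).symm
    · rw [h, hP1, hF1]; simp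
  have hsub : Icc x 1 ⊆ Icc (-1:ℝ) 1 := Icc_subset_Icc hx1.le le_rfl
  have hT : Tow (N+1) (fun i t => if t ≤ x then F i t else P i t) := by
    intro i hi
    exact glue_hasDeriv hx1 hx2 (hF.tow i hi) (hP3 i hi) (hPx i hi.le) (hPx (i+1) hi)
  have hcomp : ∀ m ≤ N+1, ∀ t ∈ Icc x 1, |F (N+1-m) t - P (N+1-m) t| ≤ bb σ (1-x) x m t := by
    intro m
    induction m with
    | zero =>
      intro _ t ht
      rw [Nat.sub_zero, hP1, bb]
      have h1 := hF.le_top t (hsub ht)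
      have h2 : 0 ≤ σ * (t-x)/(1-x) := div_nonneg (mul_nonneg hσ (by linarith [ht.1])) hd.le
      have h3 : |σ * (t-x)/(1-x)| = σ * (t-x)/(1-x) := abs_of_nonneg h2
      refine (abs_sub _ _).trans ?_
      rw [h3]
      simp
      have : σ * (t-x)/(1-x) = σ * ((t-x)/(1-x)) := by ring
      rw [this]
      linarith
    | succ m ih =>
      intro hm
      have ih' := ih (by omega)
      have e : N + 1 - m = N + 1 - (m+1) + 1 := by omega
      rw [e] at ih'
      exact comparison (e := fun t => F (N+1-(m+1)) t - P (N+1-(m+1)) t) (fun t ht =>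
        ((hF.tow _ (by omega) t (hsub ht)).mono hsub).sub (hP3 _ (by omega) t).hasDerivWithinAt)
        (bb_hasDeriv σ x hd.ne' m) (by rw [hPx _ (by omega)]; ring) (by simp [bb]) ih'
  have hbm : ∀ t ∈ Icc x 1, bb σ (1-x) x (N+1) t ≤ bb σ (1-x) x (N+1) 1 := by
    intro t ht
    have h0 : 0 ≤ t - x := by linarith [ht.1]
    have h1 : t - x ≤ 1 - x := by linarith [ht.2]
    unfold bb
    gcongr
  have hη : 0 ≤ bb σ (1-x) x (N+1) 1 := by
    unfold bb
    positivity
  refine ⟨fun i t => (1/(1+bb σ (1-x) x (N+1) 1)) * (if t ≤ x then F i t else P i t) + 0 * F i t, _, ⟨?_, ?_, ?_⟩, rfl, ?_⟩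
  · exact hT.lin hF.tow _ 0
  · intro t ht
    have : |if t ≤ x then F 0 t else P 0 t| ≤ 1 + bb σ (1-x) x (N+1) 1 := by
      split_ifs with h
      · have := hF.le_one t ht
        linarith
      · have ht' : t ∈ Icc x 1 := ⟨(not_le.1 h).le, ht.2⟩
        have h1 := hcomp (N+1) le_rfl t ht'
        rw [Nat.sub_self] at h1
        have h2 := hF.le_one t ht
        have h3 := hbm t ht'
        rw [abs_le] at *
        constructor <;> linarith
    rw [zero_mul, add_zero, abs_mul, abs_of_nonneg (by positivity), one_div, inv_mul_le_iff₀ (by positivity), mul_one]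
    exact this
  · intro t ht
    have : |if t ≤ x then F (N+1) t else P (N+1) t| ≤ σ := by
      split_ifs with h
      · exact hF.le_top t ht
      · rw [hP1]
        have h1 : 0 ≤ t - x := by linarith [not_le.1 h]
        simp only
        rw [abs_of_nonneg (by positivity), div_le_iff₀ hd]
        exact mul_le_mul_of_nonneg_left (by linarith [ht.2]) hσ
    rw [zero_mul, add_zero, abs_mul, abs_of_nonneg (by positivity), one_div, inv_mul_le_iff₀ (by positivity)]
    refine this.trans ?_
    nlinarith
  · simp only
    rw [if_neg (not_le.2 hx2), zero_mul, add_zero]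
    have hPN : P N 1 = F N x + σ * (1-x)/2 := by
      have hder : ∀ t, HasDerivAt (fun t => P N t - σ * (t-x)^2/(2*(1-x))) 0 t := by
        intro t
        have h : HasDerivAt (fun t : ℝ => t - x) 1 t := (hasDerivAt_id t).sub_const x
        have h1 := hP3 N (by omega) t
        have h2 := (((h.pow 2).const_mul σ).div_const (2*(1-x)))
        refine (h1.sub h2).congr_deriv ?_
        rw [hP1]
        simp
        field_simp
        ring
      have hconst := is_const_of_deriv_eq_zero (fun t => (hder t).differentiableAt) (fun t => (hder t).deriv) 1 x
      rw [← hPx N (by omega)] at hconst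
      have : σ * (1-x)^2/(2*(1-x)) = σ * (1-x)/2 := by field_simp
      rw [this] at hconst
      simp at hconst
      linarith
    rw [hPN]
    ring


lemma InW.neg {n : ℕ} {σ : ℝ} {F : ℕ → ℝ → ℝ} (h : InW n σ F) :
    InW n σ (fun i t => -F i t) where
  tow := fun i hi x hx => (h.tow i hi x hx).neg
  le_one := fun x hx => by rw [abs_neg]; exact h.le_one _ hx
  le_top := fun x hx => by rw [abs_neg]; exact h.le_top _ hx

lemma InW.lip {N : ℕ} {σ : ℝ} {F : ℕ → ℝ → ℝ} (h : InW (N+1) σ F) {x t : ℝ}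
    (hx : x ∈ Icc (-1:ℝ) 1) (ht : t ∈ Icc (-1:ℝ) 1) : |F N t - F N x| ≤ σ * |t - x| := by
  have := Convex.norm_image_sub_le_of_norm_hasDerivWithin_le (C := σ) (f := F N) (f' := F (N+1))
    (fun y hy => h.tow N (by omega) y hy) (fun y hy => h.le_top y hy) (convex_Icc (-1:ℝ) 1) hx ht
  simpa [Real.norm_eq_abs] using this

lemma tc_pp (L : ℕ) (t : ℝ) : tc (L+2) L t * (4 * (L+1)) = tc (L+2) (L+2) 1 * ((2*L+2)*t^2 - 1) := by
  have h := tc_ode (L+2) L t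
  have h1 := tc_pred_top (L+1) t
  rw [h1, tc_top (L+2) t, ← tc_top (L+2) 1] at h
  push_cast at h
  linarith

lemma om_N (L : ℕ) (t : ℝ) : om (L+2) (L+2) t = 2 * (L+3) * tc (L+2) (L+2) 1 * t := by
  have h1 := tc_pred_top (L+1) t
  have h2 : tc (L+2) (L+2+1) t = 0 := tc_zero (by omega) t
  have h3 : tc (L+2) (L+2) t = tc (L+2) (L+2) 1 := by rw [tc_top, tc_top]
  rw [om, h2, h3, show L+2-1 = L+1 by omega, h1]
  push_cast
  have : (L:ℝ) + 2 ≠ 0 := by positivity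
  field_simp
  ring

lemma om_N1 (L : ℕ) (t : ℝ) : om (L+2) (L+1) t * (2 * (L+2)) =
    tc (L+2) (L+2) 1 * (2 * (L+2) * (L+3) * t^2 - (L+4)) := by
  have h1 := tc_pred_top (L+1) t
  have h3 : tc (L+2) (L+2) t = tc (L+2) (L+2) 1 := by rw [tc_top, tc_top]
  have h4 := tc_pp L t
  have h4' : tc (L+2) L t = tc (L+2) (L+2) 1 * ((2*L+2)*t^2 - 1) / (4 * (L+1)) := by
    rw [← h4]; field_simp
  rw [om, show L + 1 + 1 = L + 2 by ring, h3, show L+1-1 = L by omega, h1, h4']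
  push_cast
  have : (L:ℝ) + 2 ≠ 0 := by positivity
  have : (L:ℝ) + 1 ≠ 0 := by positivity
  field_simp
  ring

/-- The comparison tower. -/
noncomputable def qq (N : ℕ) (α β : ℝ) (i : ℕ) (t : ℝ) : ℝ :=
  tc N i t + (om N i t * (α * t + β) + i * α * om N (i-1) t)

lemma qq_tow (N n : ℕ) (α β : ℝ) : Tow n (qq N α β) := by
  intro i _ x _
  apply HasDerivAt.hasDerivWithinAt
  have hl : HasDerivAt (fun t : ℝ => α * t + β) α x := by
    simpa using ((hasDerivAt_id x).const_mul α).add_const β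
  have h1 := (om_hasDeriv N i x).mul hl
  have h2 : HasDerivAt (fun t => i * α * om N (i-1) t) (i * α * om N i x) x := by
    rcases i with _ | i
    · simpa using hasDerivAt_const x (0:ℝ)
    · exact (om_hasDeriv N i x).const_mul _
  refine HasDerivAt.congr_deriv (f := qq N α β i) ((tc_hasDeriv N i x).add (h1.add h2)) ?_
  simp only [qq, Nat.add_sub_cancel]
  push_cast
  ring

lemma interior_bound {L : ℕ} {σ : ℝ} (hσ : 0 ≤ σ) {F : ℕ → ℝ → ℝ} (hF : InW (L+3) σ F) {x δ : ℝ}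
    (hx : x ∈ Icc (-1:ℝ) 1) (hδ : 0 < δ) (hmax : ∀ t ∈ Icc (-1:ℝ) 1, |F (L+2) t| ≤ F (L+2) x) :
    F (L+2) x ≤ tc (L+2) (L+2) 1 + σ * ((x^2 + 1/(2*(L+3)))/(2*δ) + δ/2) := by
  by_contra! hcon
  set A := tc (L+2) (L+2) 1 with hA
  have hA0 : 0 < A := tc_pos_one le_rfl
  set M := F (L+2) x with hM
  set C := A + σ/(2*δ) * (x^2 + 1/(2*(L+3))) with hC
  have hC0 : 0 < C := by positivity
  have he : 0 < M - C - σ*δ/2 := by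
    have : C + σ*δ/2 = A + σ * ((x^2 + 1/(2*(L+3)))/(2*δ) + δ/2) := by rw [hC]; ring
    linarith
  set e := M - C - σ*δ/2 with hedef
  have hσδ : 0 ≤ σ*δ/2 := by positivity
  have hM0 : 0 < M := by linarith
  set l := 1 - e/M with hl
  have hl1 : |l| < 1 := by
    have h1 : 0 < e/M := by positivity
    have h2 : e/M ≤ 1 := by rw [div_le_one hM0]; linarith
    rw [abs_lt]; constructor <;> linarith
  set α := -σ/(2*δ) / (A*(L+3)*(L+4)) with hα
  set β := σ*x/δ/(2*(L+3)*A) with hβ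
  have hQN : ∀ t, qq (L+2) α β (L+2) t = C - σ/(2*δ)*(t-x)^2 := by
    intro t
    have h1 := om_N1 L t
    have h1' : om (L+2) (L+1) t = A * (2 * (L+2) * (L+3) * t^2 - (L+4)) / (2 * (L+2)) := by
      rw [hA, ← h1]; field_simp
    have h3 : tc (L+2) (L+2) t = A := by rw [hA, tc_top, tc_top]
    rw [qq, h3, om_N, show L+2-1 = L+1 by omega, h1', ← hA, hα, hβ, hC]
    push_cast
    have : (L:ℝ) + 2 ≠ 0 := by positivity
    have : (L:ℝ) + 3 ≠ 0 := by positivity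
    have : (L:ℝ) + 4 ≠ 0 := by positivity
    field_simp
    ring
  have halt := alt_nodes (N := L+2) (r := L+3) (f := F 0) (g := qq (L+2) α β 0) (l := l) (by omega) hF.le_one
    (fun i hi => by
      rw [qq, tc_node (by omega), om_node (by omega)]; simp) hl1
  have hT := (hF.tow.mono (show L+2 ≤ L+3 by omega)).lin (qq_tow (L+2) (L+2) α β) l (-1)
  have h2 := Alt.iter (m := 1) (ε := -1) hT (L+2) le_rfl (by
    rw [show 1 + (L+2) = L+3 by omega]; exact halt)
  obtain ⟨ξ, hξ, h3⟩ := h2.exists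
  rw [hQN] at h3
  have h4 := hF.lip hx hξ
  have h5 := hmax ξ hξ
  rw [← hM] at h4
  have h6 : |ξ - x| ≤ (ξ-x)^2/(2*δ) + δ/2 := by
    have e1 : (ξ-x)^2 = |ξ-x|^2 := (sq_abs _).symm
    rw [e1]
    have : 0 ≤ (|ξ-x| - δ)^2/(2*δ) := by positivity
    have e2 : (|ξ-x| - δ)^2/(2*δ) = |ξ-x|^2/(2*δ) + δ/2 - |ξ-x| := by field_simp; ring
    linarith
  have h7 : σ * |ξ - x| ≤ σ * ((ξ-x)^2/(2*δ) + δ/2) := mul_le_mul_of_nonneg_left h6 hσ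
  have h8 : M - F (L+2) ξ ≤ σ * |ξ - x| := by
    have := (abs_le.1 h4).1; linarith
  have h9 : e/M * F (L+2) ξ ≤ e := by
    calc e/M * F (L+2) ξ ≤ e/M * M := mul_le_mul_of_nonneg_left ((abs_le.1 h5).2) (by positivity)
      _ = e := by field_simp
  have h10 : σ * ((ξ-x)^2/(2*δ) + δ/2) = σ/(2*δ)*(ξ-x)^2 + σ*δ/2 := by ring
  have h11 : l * F (L+2) ξ = F (L+2) ξ - e/M * F (L+2) ξ := by rw [hl]; ring
  rw [h11] at h3
  linarith


lemma wlog_inter {n k : ℕ} {σ : ℝ}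
    (h : ∀ F x, InW n σ F → 0 ≤ x → x < 1 → F (k+1) x = 0 → 
      (∀ t ∈ Icc (-1:ℝ) 1, |F k t| ≤ F k x) → ∃ G, InW n σ G ∧ F k x ≤ |G k 1|) :
    ∀ F x, InW n σ F → -1 < x → x < 1 → F (k+1) x = 0 → (∀ t ∈ Icc (-1:ℝ) 1, |F k t| ≤ |F k x|) →
      ∃ G, InW n σ G ∧ |F k x| ≤ |G k 1| := by
  have h1 : ∀ F x, InW n σ F → 0 ≤ x → x < 1 → F (k+1) x = 0 → 
      (∀ t ∈ Icc (-1:ℝ) 1, |F k t| ≤ |F k x|) → ∃ G, InW n σ G ∧ |F k x| ≤ |G k 1| := by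
    intro F x hF hx0 hx1 hF1 hm
    rcases le_total 0 (F k x) with h0 | h0
    · rw [abs_of_nonneg h0] at hm ⊢
      exact h F x hF hx0 hx1 hF1 hm
    · rw [abs_of_nonpos h0] at hm ⊢
      exact h (fun i t => -F i t) x hF.neg hx0 hx1 (by simp [hF1]) (fun t ht => by
        rw [abs_neg]; exact hm t ht)
  intro F x hF hx0 hx1 hF1 hm
  rcases le_total 0 x with h0 | h0
  · exact h1 F x hF h0 hx1 hF1 hm
  · obtain ⟨G, hG, h2⟩ := h1 (fun i t => (-1)^i * F i (-t)) (-x) hF.reflect (by linarith) (by linarith)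
      (by simp [hF1]) (fun t ht => by
        rw [abs_refl, abs_refl, neg_neg]; exact hm _ (neg_mem_I ht))
    refine ⟨G, hG, ?_⟩
    rwa [abs_refl, neg_neg] at h2

lemma caseB {L : ℕ} {s : ℝ} (hs0 : 0 ≤ s) (hs1 : s ≤ 1) {F : ℕ → ℝ → ℝ} {x : ℝ}
    (hF : InW (L+2+1) (s * (2^(L+2) * ((L+2+1).factorial : ℝ))) F) (hx0 : 0 ≤ x) (hx1 : x < 1)
    (hF1 : F (L+2+1) x = 0) (hm : ∀ t ∈ Icc (-1:ℝ) 1, |F (L+2) t| ≤ F (L+2) x) :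
    ∃ G, InW (L+2+1) (s * (2^(L+2) * ((L+2+1).factorial : ℝ))) G ∧ F (L+2) x ≤ |G (L+2) 1| := by
  set A := tc (L+2) (L+2) 1 with hA
  have hA0 : 0 < A := tc_pos_one le_rfl
  set σ := s * (2^(L+2) * ((L+2+1).factorial : ℝ)) with hσdef
  have hσ : 0 ≤ σ := by positivity
  have hAe : A = 2^(L+1) * ((L+2).factorial : ℝ) := by
    rw [hA, tc_top]; rfl
  have hσn : (2:ℝ)^(L+2) * ((L+2+1).factorial : ℝ) = 2 * (L+3) * A := by
    rw [hAe, Nat.factorial_succ (L+2)]; push_cast; ring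
  have hσA : σ = s * (2 * (L+3) * A) := by rw [hσdef, hσn]
  have hxI : x ∈ Icc (-1:ℝ) 1 := ⟨by linarith, hx1.le⟩
  have hL : (0:ℝ) ≤ L := Nat.cast_nonneg L
  have hn : (0:ℝ) < 2*(L+3) := by positivity
  have hn6 : (1:ℝ)/(2*(L+3)) ≤ 1/6 := by
    apply one_div_le_one_div_of_le <;> linarith
  have hnp : (0:ℝ) < 1/(2*(L+3)) := by positivity
  have hnn : (1:ℝ)/(2*(L+3)) * (2*(L+3)) = 1 := by field_simp
  set q : ℝ := 1/(2*(L+3)) with hq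
  have hb : ∀ δ, 0 < δ → F (L+2) x ≤ A + σ * ((x^2 + q)/(2*δ) + δ/2) :=
    fun δ hδ => interior_bound hσ hF hxI hδ hm
  rcases le_or_gt (x^2 + q) ((1-q)^2) with hc | hc
  · refine ⟨_, lower_in hs0 hs1, ?_⟩
    refine le_trans ?_ (le_abs_self _)
    have h1 := hb (1-q) (by linarith)
    have h2 := tc_pred_top (L+2) 1
    rw [h2, tc_top (L+2+1), ← hA, show L+2+1-1 = L+2 by omega, hσn, one_mul]
    have hc0 : 0 < 1 - q := by linarith
    have h3 : (x^2 + q)/(2*(1-q)) ≤ (1-q)/2 := by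
      rw [div_le_iff₀ (by linarith)]; nlinarith
    have h4 : σ * ((x^2 + q)/(2*(1-q)) + (1-q)/2) ≤ σ * (1-q) :=
      mul_le_mul_of_nonneg_left (by linarith) hσ
    have h5 : σ * (1-q) = s * (2*(L+3)*A) - s * A := by
      rw [hσA]; linear_combination (-s*A) * hnn
    linarith
  · have hx3 : 0.725 < x := by
      have : (0.725:ℝ)^2 < x^2 := by nlinarith
      nlinarith
    have hM : F (L+2) x ≤ A * (2*(L+3) + 3/2) := by
      have h1 := hb 1 one_pos
      have h2 : σ * ((x^2 + q)/(2*1) + 1/2) ≤ (2*(L+3)*A) * (1 + q/2) := by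
        apply mul_le_mul _ _ (by positivity) (by positivity)
        · rw [hσA]
          exact mul_le_of_le_one_left (by positivity) hs1
        · nlinarith
      have h3 : (2*(L+3)*A) * (1 + q/2) = 2*(L+3)*A + A/2 := by linear_combination (A/2) * hnn
      linarith
    obtain ⟨G, η, hG, hη, hval⟩ := extension hσ hF (by linarith) hx1 hF1
    refine ⟨G, hG, le_trans ?_ (le_abs_self _)⟩
    have hd : 0 < 1 - x := by linarith
    have hη' : η = σ * (1-x) * ((1-x)^(L+2) * (L+5) / ((L+4) * ((L+2+1).factorial : ℝ))) := by
      rw [hη, bb, Nat.factorial_succ (L+2+1)]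
      push_cast
      have : (L:ℝ) + 4 ≠ 0 := by positivity
      have e : (L:ℝ) + 2 + 1 + 1 = L + 4 := by ring
      rw [e]
      field_simp
      ring
    have hη0 : 0 ≤ η := by rw [hη']; positivity
    rw [hval, le_div_iff₀ (by linarith)]
    have hpow : (2*(1-x))^(L+2) ≤ 0.31 := by
      calc (2*(1-x))^(L+2) ≤ (2*(1-x))^2 := pow_le_pow_of_le_one (by linarith) (by linarith) (by omega)
        _ ≤ 0.31 := by nlinarith
    have hkey : F (L+2) x * ((1-x)^(L+2) * (L+5) / ((L+4) * ((L+2+1).factorial : ℝ))) ≤ 1/2 := by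
      have h1 : F (L+2) x * ((1-x)^(L+2) * (L+5) / ((L+4) * ((L+2+1).factorial : ℝ))) ≤
        A * (2*(L+3) + 3/2) * ((1-x)^(L+2) * (L+5) / ((L+4) * ((L+2+1).factorial : ℝ))) :=
        mul_le_mul_of_nonneg_right hM (by positivity)
      refine h1.trans ?_
      have h2 : A * (2*(L+3) + 3/2) * ((1-x)^(L+2) * (L+5) / ((L+4) * ((L+2+1).factorial : ℝ))) =
          (2*(1-x))^(L+2) * ((2*(L+3) + 3/2) * (L+5)) / (2 * ((L+3) * (L+4))) := by
        rw [hAe, Nat.factorial_succ (L+2), mul_pow]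
        push_cast
        have e : (L:ℝ) + 2 + 1 = L + 3 := by ring
        rw [e]
        field_simp
        ring
      rw [h2, div_le_iff₀ (by positivity)]
      have h3 : (2*(1-x))^(L+2) * ((2*(L+3) + 3/2) * (L+5)) ≤ 0.31 * ((2*(L+3) + 3/2) * (L+5)) :=
        mul_le_mul_of_nonneg_right hpow (by positivity)
      refine h3.trans ?_
      nlinarith
    have h5 : F (L+2) x * η ≤ σ * (1-x) * (1/2) := by
      rw [hη']
      calc _ = σ * (1-x) * (F (L+2) x * ((1-x)^(L+2) * (L+5) / ((L+4) * ((L+2+1).factorial : ℝ)))) := by ring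
        _ ≤ _ := mul_le_mul_of_nonneg_left hkey (by positivity)
    linarith


lemma taylor_right {σ : ℝ} {F : ℕ → ℝ → ℝ} (hF : InW 2 σ F) {x t : ℝ}
    (hx1 : -1 < x) (ht : t ∈ Icc x 1) : |F 0 t - F 0 x - F 1 x * (t-x)| ≤ σ * (t-x)^2/2 := by
  have hsub : Icc x 1 ⊆ Icc (-1:ℝ) 1 := Icc_subset_Icc hx1.le le_rfl
  have hx : x ∈ Icc (-1:ℝ) 1 := ⟨hx1.le, ht.1.trans ht.2⟩
  have h : ∀ t, HasDerivAt (fun t : ℝ => t - x) 1 t := fun t => (hasDerivAt_id t).sub_const x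
  have := comparison (x := x) (e := fun t => F 0 t - F 0 x - F 1 x * (t-x)) (e' := fun t => F 1 t - F 1 x)
    (b := fun t => σ * (t-x)^2/2) (b' := fun t => σ * (t-x))
    (fun t ht => by
      have h1 := ((hF.tow 0 (by omega) t (hsub ht)).mono hsub)
      have h2 := (h1.sub_const (F 0 x)).sub ((h t).const_mul (F 1 x)).hasDerivWithinAt
      refine h2.congr_deriv ?_
      simp)
    (fun t => by
      have := (((h t).pow 2).const_mul σ).div_const 2
      refine this.congr_deriv ?_
      simp
      ring) (by simp) (by simp)
    (fun t ht => by
      have := InW.lip (N := 1) hF hx (hsub ht)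
      rwa [abs_of_nonneg (by linarith [ht.1] : 0 ≤ t - x)] at this)
  exact this t ht

lemma taylor_left {σ : ℝ} {F : ℕ → ℝ → ℝ} (hF : InW 2 σ F) {x t : ℝ}
    (hx1 : x < 1) (ht : t ∈ Icc (-1) x) : |F 0 t - F 0 x - F 1 x * (t-x)| ≤ σ * (t-x)^2/2 := by
  have := taylor_right hF.reflect (x := -x) (t := -t) (by linarith) ⟨by linarith [ht.2], by linarith [ht.1]⟩
  simp only [neg_neg] at this
  convert! this using 2 <;> ring

set_option maxHeartbeats 1000000 in
lemma caseC {σ : ℝ} (hσ0 : 0 ≤ σ) (hσ4 : σ ≤ 4) {F : ℕ → ℝ → ℝ} {x : ℝ}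
    (hF : InW 2 σ F) (hx0 : 0 ≤ x) (hx1 : x < 1)
    (hm : ∀ t ∈ Icc (-1:ℝ) 1, |F 1 t| ≤ F 1 x) :
    ∃ G, InW 2 σ G ∧ F 1 x ≤ |G 1 1| := by
  set M := F 1 x with hM
  have hM0 : 0 ≤ M := (abs_nonneg _).trans (hm 1 (by simp))
  have hxI : x ∈ Icc (-1:ℝ) 1 := ⟨by linarith, hx1.le⟩
  have hr := (abs_le.1 (taylor_right hF (by linarith) (right_mem_Icc.2 hx1.le))).1
  have hl := (abs_le.1 (taylor_left hF hx1 (left_mem_Icc.2 hxI.1))).2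
  have h1 := abs_le.1 (hF.le_one 1 (by simp))
  have h2 := abs_le.1 (hF.le_one (-1) (by simp))
  rw [← hM] at hr hl
  have hb : M ≤ 1 + σ * (1+x^2)/2 := by linarith
  rcases le_total σ 1 with hs | hs
  · refine ⟨fun i t => if i = 0 then σ*(t^2-1)/2 + t else if i = 1 then σ*t+1 else σ, ⟨?_, ?_, ?_⟩, ?_⟩
    · intro i hi t _
      apply HasDerivAt.hasDerivWithinAt
      have h := hasDerivAt_id t
      interval_cases i
      · have := ((((h.pow 2).sub_const 1).const_mul σ).div_const 2).add h
        refine this.congr_deriv ?_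
        simp; ring
      · have := (h.const_mul σ).add_const 1
        refine this.congr_deriv ?_
        simp
    · intro t ht
      simp only [if_true]
      rw [abs_le]
      have e1 : 0 ≤ t + 1 := by linarith [ht.1]
      have e2 : 0 ≤ 1 - t := by linarith [ht.2]
      constructor
      · have : 0 ≤ (t+1)*(1 - σ*(1-t)/2) := mul_nonneg e1 (by nlinarith)
        linarith
      · have : 0 ≤ σ*((t+1)*(1-t)) := by positivity
        linarith
    · intro t _
      simp [abs_of_nonneg hσ0]
    · refine le_trans ?_ (le_abs_self _)
      simp
      have hx2 : x^2 ≤ 1 := by nlinarith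
      have := mul_le_mul_of_nonneg_left hx2 hσ0
      linarith
  · obtain ⟨r, hr0, hrσ⟩ : ∃ r : ℝ, 0 ≤ r ∧ r^2 = σ := ⟨√σ, Real.sqrt_nonneg _, Real.sq_sqrt hσ0⟩
    have hr1 : 1 ≤ r := by nlinarith
    have hr2 : r ≤ 2 := by nlinarith
    have hσp : 0 < σ := by linarith
    have hMr : M ≤ 2*r := by
      rcases le_or_gt M (σ*(1+x)) with hc | hc
      · have hq : M/σ ≤ 1 + x := by rw [div_le_iff₀ hσp]; linarith
        have hq0 : 0 ≤ M/σ := by positivity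
        have h3 := (abs_le.1 (taylor_left hF hx1 (t := x - M/σ) ⟨by linarith, by linarith⟩)).2
        have h4 := abs_le.1 (hF.le_one (x - M/σ) ⟨by linarith, by linarith⟩)
        have h5 := abs_le.1 (hF.le_one x hxI)
        rw [← hM] at h3
        have e1 : M * (x - M/σ - x) = -(M^2/σ) := by ring
        have e2 : σ * (x - M/σ - x)^2/2 = (M^2/σ)/2 := by field_simp; ring
        rw [e1, e2] at h3
        have h6 : M^2/σ ≤ 4 := by linarith
        rw [div_le_iff₀ hσp, ← hrσ] at h6
        exact (abs_le_of_sq_le_sq' (by linarith [mul_pow 2 r 2]) (by linarith)).2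
      · have h3 : σ*(1+2*x-x^2) < 2 := by linarith
        rw [← hrσ] at h3 hb
        have h4 : (r*(1+x))^2 ≤ 2^2 := by
          have : 0 ≤ r^2*((3*x+1)*(1-x)) := by
            have : 0 ≤ 1 - x := by linarith
            positivity
          nlinarith
        have h5 : r*(1+x) ≤ 2 := (abs_le_of_sq_le_sq' h4 (by norm_num)).2
        have h6 : r*(1+x^2) ≤ 2 := by nlinarith [mul_nonneg hr0 (mul_nonneg hx0 (sub_nonneg.2 hx1.le))]
        have h7 : 0 ≤ (r-1)*(2-(r+1)*(1+x^2)/2) := mul_nonneg (by linarith) (by nlinarith)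
        nlinarith
    refine ⟨fun i t => if i = 0 then (r*(t-1)+2)^2/2 - 1 else if i = 1 then r*(r*(t-1)+2) else σ, ⟨?_, ?_, ?_⟩, ?_⟩
    · intro i hi t _
      apply HasDerivAt.hasDerivWithinAt
      have h : HasDerivAt (fun t => r*(t-1)+2) r t := by
        simpa using (((hasDerivAt_id t).sub_const 1).const_mul r).add_const 2
      interval_cases i
      · have := ((h.pow 2).div_const 2).sub_const 1
        refine this.congr_deriv ?_
        simp; ring
      · have := (h.const_mul r)
        refine this.congr_deriv ?_
        simp [← hrσ]; ring
    · intro t ht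
      simp only [if_true]
      have e1 : r*(t-1)+2 ≤ 2 := by nlinarith [ht.2]
      have e2 : -2 ≤ r*(t-1)+2 := by nlinarith [ht.1]
      rw [abs_le]
      constructor <;> nlinarith
    · intro t _
      simp [abs_of_nonneg hσ0]
    · refine le_trans ?_ (le_abs_self _)
      simp
      linarith


lemma uniqI {x : ℝ} (hx : x ∈ Icc (-1:ℝ) 1) : UniqueDiffWithinAt ℝ (Icc (-1:ℝ) 1) x :=
  uniqueDiffOn_Icc (by norm_num) x hx

lemma memW.inW {n : ℕ} {σ : ℝ} {f : ℝ → ℝ} (h : memW n σ f) :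
    InW n σ (fun i => iteratedDerivWithin i f (Icc (-1:ℝ) 1)) where
  tow := fun i hi x hx => by
    simp only [iteratedDerivWithin_succ]
    exact (h.1 i hi x hx).hasDerivWithinAt
  le_one := fun x hx => by simpa using h.2.1 x hx
  le_top := h.2.2

lemma Tow.iter_eq {n : ℕ} {F : ℕ → ℝ → ℝ} (h : Tow n F) : ∀ i ≤ n, ∀ x ∈ Icc (-1:ℝ) 1,
    iteratedDerivWithin i (F 0) (Icc (-1:ℝ) 1) x = F i x := by
  intro i
  induction i with
  | zero => intro _ x _; simp
  | succ i ih =>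
    intro hi x hx
    have ih' := ih (by omega)
    rw [iteratedDerivWithin_succ, derivWithin_congr ih' (ih' x hx)]
    exact (h i (by omega) x hx).derivWithin (uniqI hx)

lemma InW.memW {n : ℕ} {σ : ℝ} {F : ℕ → ℝ → ℝ} (h : InW n σ F) : memW n σ (F 0) := by
  refine ⟨fun i hi x hx => ?_, h.le_one, fun x hx => ?_⟩
  · have h1 := h.tow i hi x hx
    have h2 := h.tow.iter_eq i hi.le
    exact (h1.congr h2 (h2 x hx)).differentiableWithinAt
  · rw [h.tow.iter_eq n le_rfl x hx]
    exact h.le_top x hx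

lemma main_inter {N k : ℕ} (hN : 1 ≤ N) (hk1 : 1 ≤ k) (hk2 : k ≤ N) {s : ℝ} (hs0 : 0 ≤ s) (hs1 : s ≤ 1) :
    ∀ F x, InW (N+1) (s * (2^N * ((N+1).factorial : ℝ))) F → -1 < x → x < 1 → F (k+1) x = 0 →
      (∀ t ∈ Icc (-1:ℝ) 1, |F k t| ≤ |F k x|) →
      ∃ G, InW (N+1) (s * (2^N * ((N+1).factorial : ℝ))) G ∧ |F k x| ≤ |G k 1| := by
  rcases hk2.lt_or_eq with hk | hk
  · intro F x hF hx1 hx2 hF1 _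
    obtain ⟨j, rfl⟩ : ∃ j, k = j + 1 := ⟨k-1, by omega⟩
    refine ⟨_, lower_in hs0 hs1, le_trans ?_ (le_abs_self _)⟩
    have := thmA (j := j) (N := N) (by omega) hs0 hs1 hF hx1 hx2 hF1
    rw [lower_val hN hk2]
    push_cast
    exact this
  · subst hk
    apply wlog_inter
    intro F x hF hx0 hx1 hF1 hm
    obtain rfl | ⟨L, rfl⟩ : k = 1 ∨ ∃ L, k = L + 2 := by
      rcases Nat.lt_or_ge k 2 with h | h
      · left; omega
      · right; exact ⟨k-2, by omega⟩
    · have e : s * (2^1 * ((1+1).factorial : ℝ)) = s * 4 := by norm_num [Nat.factorial]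
      rw [e] at hF ⊢
      exact caseC (by linarith) (by linarith) hF hx0 hx1 hm
    · exact caseB hs0 hs1 hF hx0 hx1 hF1 hm

/-- Karlin's conjecture in the polynomial range `0 ≤ σ ≤ σ_n`,
for all `n ≥ 2` and `1 ≤ k ≤ n-1`. -/
theorem karlin_conjecture_polynomial_range (n k : ℕ) (σ : ℝ) (hn : 2 ≤ n)
    (hk1 : 1 ≤ k) (hk2 : k ≤ n - 1) (hσ0 : 0 ≤ σ) (hσn : σ ≤ sigmaN n) :
    (∀ x ∈ Icc (-1:ℝ) 1, mval n k x σ ≤ mval n k 1 σ) ∧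
    sSup {y | ∃ x ∈ Icc (-1:ℝ) 1, y = mval n k x σ} = mval n k 1 σ := by
  obtain ⟨N, rfl⟩ : ∃ N, n = N + 1 := ⟨n-1, by omega⟩
  have hN : 1 ≤ N := by omega
  have hkN : k ≤ N := by omega
  have hP : (0:ℝ) < 2^N * ((N+1).factorial : ℝ) := by positivity
  have hσn' : σ ≤ 2^N * ((N+1).factorial : ℝ) := hσn
  obtain ⟨s, hs0, hs1, rfl⟩ : ∃ s : ℝ, 0 ≤ s ∧ s ≤ 1 ∧ σ = s * (2^N * ((N+1).factorial : ℝ)) :=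
    ⟨σ / (2^N * ((N+1).factorial : ℝ)), by positivity, by rwa [div_le_one hP], by field_simp⟩
  have h1I : (1:ℝ) ∈ Icc (-1:ℝ) 1 := by simp
  have hbdd : BddAbove {y | ∃ f : ℝ → ℝ, memW (N+1) (s * (2^N * ((N+1).factorial : ℝ))) f ∧
      y = |iteratedDerivWithin k f (Icc (-1:ℝ) 1) 1|} := by
    refine ⟨|tc N k 1 + s * om N k 1|, ?_⟩
    rintro y ⟨f, hf, rfl⟩
    exact bdd_one hN hkN hf.inW
  have hne : ∀ x, {y | ∃ f : ℝ → ℝ, memW (N+1) (s * (2^N * ((N+1).factorial : ℝ))) f ∧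
      y = |iteratedDerivWithin k f (Icc (-1:ℝ) 1) x|}.Nonempty :=
    fun x => ⟨_, _, (lower_in hs0 hs1).memW, rfl⟩
  have hmain : ∀ x ∈ Icc (-1:ℝ) 1, mval (N+1) k x (s * (2^N * ((N+1).factorial : ℝ))) ≤
      mval (N+1) k 1 (s * (2^N * ((N+1).factorial : ℝ))) := by
    intro x hx
    refine csSup_le (hne x) ?_
    rintro y ⟨f, hf, rfl⟩
    obtain ⟨G, hG, h⟩ := reduce_interior (by omega) (main_inter hN hk1 hkN hs0 hs1) hf.inW hx
    refine h.trans (le_csSup hbdd ⟨G 0, hG.memW, ?_⟩)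
    rw [hG.tow.iter_eq k (by omega) 1 h1I]
  refine ⟨hmain, ?_⟩
  apply IsGreatest.csSup_eq
  refine ⟨⟨1, h1I, rfl⟩, ?_⟩
  rintro y ⟨x, hx, rfl⟩
  exact hmain x hx
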